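/- For every integer r ≥ 2 and every harmonious pair {P, Q} of distinct r-patterns, asymptotically almost surely z_{{P,Q}}(RM_n^(r)) = Θ(n^(1/(r−1))); that is, there exist constants c₁, c₂ > 0 (depending only on r, P, Q) such that the probability that c₁·n^(1/(r−1)) ≤ z_{{P,Q}}(RM_n^(r)) ≤ c₂·n^(1/(r−1)) tends to 1 as n → ∞. -/

import Mathlib

open Finset
open scoped Classical

/-- An ordered `r`-matching of size `n`: a partition of `[r*n] = {1,…,r*n}` into `n`
pairwise disjoint `r`-element subsets (the edges). -/
def IsOrderedMatching (r n : ℕ) (M : Finset (Finset ℕ)) : Prop :=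
  M.card = n ∧ (∀ e ∈ M, e.card = r) ∧
  (∀ e ∈ M, ∀ f ∈ M, e ≠ f → Disjoint e f) ∧
  M.biUnion id = Finset.Icc 1 (r * n)

/-- Two disjoint `r`-element sets `e`, `f` form the `r`-pattern `P`: the unique
order-preserving bijection from `e ∪ f` onto `[2r]` maps the pair `{e, f}` onto `P`. -/
def FormsPattern (r : ℕ) (e f : Finset ℕ) (P : Finset (Finset ℕ)) : Prop :=
  ∃ φ : ℕ → ℕ, StrictMonoOn φ ↑(e ∪ f) ∧
    (e ∪ f).image φ = Finset.Icc 1 (2 * r) ∧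
    ({e.image φ, f.image φ} : Finset (Finset ℕ)) = P

/-- A `Ps`-clique: a family of pairwise disjoint `r`-element subsets of `ℕ`, every two of
which form a pattern belonging to `Ps`. -/
def IsClique (r : ℕ) (Ps : Set (Finset (Finset ℕ))) (K : Finset (Finset ℕ)) : Prop :=
  (∀ e ∈ K, e.card = r) ∧ (∀ e ∈ K, ∀ f ∈ K, e ≠ f → Disjoint e f) ∧
  (∀ e ∈ K, ∀ f ∈ K, e ≠ f → ∃ P ∈ Ps, FormsPattern r e f P)

/-- `z_Ps(M)`: the maximum size of a subfamily of `M` that is a `Ps`-clique. -/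
noncomputable def zClique (r : ℕ) (Ps : Set (Finset (Finset ℕ))) (M : Finset (Finset ℕ)) : ℕ :=
  sSup {k | ∃ K : Finset (Finset ℕ), K ⊆ M ∧ IsClique r Ps K ∧ K.card = k}

/-- All ordered `r`-matchings of size `n` (as a finset). -/
noncomputable def matchingFamilies (r n : ℕ) : Finset (Finset (Finset ℕ)) :=
  ((Finset.Icc 1 (r * n)).powerset.powerset).filter (IsOrderedMatching r n)

/-- The probability of the event `A` for a uniformly random ordered `r`-matching of size `n`. -/
noncomputable def prob (r n : ℕ) (A : Finset (Finset ℕ) → Prop) : ℝ :=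
  (((matchingFamilies r n).filter A).card : ℝ) / ((matchingFamilies r n).card : ℝ)

/-- Expectation of `X` with respect to a uniformly random ordered `r`-matching of size `n`. -/
noncomputable def expect (r n : ℕ) (X : Finset (Finset ℕ) → ℝ) : ℝ :=
  (∑ M ∈ matchingFamilies r n, X M) / ((matchingFamilies r n).card : ℝ)

/-- An `r`-partite `r`-pattern: each edge contains exactly one of `{2i-1, 2i}` for each
`i = 1, …, r`. -/
def IsPartitePattern (r : ℕ) (P : Finset (Finset ℕ)) : Prop :=
  IsOrderedMatching r 2 P ∧
  ∀ e ∈ P, ∀ i ∈ Finset.Icc 1 r, (e ∩ {2 * i - 1, 2 * i}).card = 1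

/-- An `r`-pattern `P` is collectable if there exist arbitrarily large `{P}`-cliques. -/
def Collectable (r : ℕ) (P : Finset (Finset ℕ)) : Prop :=
  ∀ k : ℕ, ∃ K : Finset (Finset ℕ), IsClique r {P} K ∧ K.card = k

/-- The word of a pattern `P` over `{A=true, B=false}`: the `j`-th letter is `true` iff
vertex `j` lies in the edge of `P` containing `1`. -/
noncomputable def patternWord (r : ℕ) (P : Finset (Finset ℕ)) : List Bool :=
  (List.range (2 * r)).map (fun j => decide (∃ e ∈ P, 1 ∈ e ∧ j + 1 ∈ e))

/-- `lam` is a splitting of the word `w` into consecutive blocks of the form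
`A^t B^t` or `B^t A^t` with half-lengths given by `lam`. -/
def IsBlockSplitting (w : List Bool) (lam : List ℕ) : Prop :=
  (∀ t ∈ lam, 1 ≤ t) ∧
  ∃ bs : List Bool, bs.length = lam.length ∧
    w = (List.zipWith (fun t b => List.replicate t b ++ List.replicate t !b) lam bs).flatten

/-- The pattern `P` has composition `lam` (the sequence of half-lengths of the blocks of
its unique splitting). -/
def HasComposition (r : ℕ) (P : Finset (Finset ℕ)) (lam : List ℕ) : Prop :=
  IsBlockSplitting (patternWord r P) lam

/-- Two distinct collectable `r`-patterns are harmonious if they have the same composition. -/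
def Harmonious (r : ℕ) (P Q : Finset (Finset ℕ)) : Prop :=
  P ≠ Q ∧ Collectable r P ∧ Collectable r Q ∧
  ∃ lam : List ℕ, HasComposition r P lam ∧ HasComposition r Q lam

/-- A pair of distinct `r`-patterns is a mismatch if exactly one of them is collectable, or
both are collectable but their compositions differ. -/
def Mismatch (r : ℕ) (P Q : Finset (Finset ℕ)) : Prop :=
  P ≠ Q ∧
  ((Collectable r P ∧ ¬ Collectable r Q) ∨
   (¬ Collectable r P ∧ Collectable r Q) ∨
   (Collectable r P ∧ Collectable r Q ∧
     ¬ ∃ lam : List ℕ, HasComposition r P lam ∧ HasComposition r Q lam))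

/-- The trace of an ordered `r`-matching of size `k` on `[rk]`: the `j`-th letter equals
`i` when `j` is the `i`-th smallest element of the edge containing `j`. -/
noncomputable def trace (r k : ℕ) (M : Finset (Finset ℕ)) : List ℕ :=
  (List.range (r * k)).map (fun j₀ =>
    ((Finset.Icc 1 (r * k)).filter
      (fun x => x ≤ j₀ + 1 ∧ ∃ e ∈ M, j₀ + 1 ∈ e ∧ x ∈ e)).card)

/-- `a_Ps(k)`: the number of `Ps`-cliques of size `k` whose edges partition `[rk]`. -/
noncomputable def cliqueCount (r : ℕ) (Ps : Set (Finset (Finset ℕ))) (k : ℕ) : ℕ :=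
  (((Finset.Icc 1 (r * k)).powerset.powerset).filter
    (fun M => IsOrderedMatching r k M ∧ IsClique r Ps M)).card

/-- The maximum size of any `Ps`-clique whatsoever. -/
noncomputable def maxCliqueSize (r : ℕ) (Ps : Set (Finset (Finset ℕ))) : ℕ :=
  sSup {k | ∃ K : Finset (Finset ℕ), IsClique r Ps K ∧ K.card = k}

/-- `M` contains a copy of the ordered `r`-matching `H` of size `k`: a subfamily `N ⊆ M` of
`k` edges such that the order-preserving bijection from the union of the edges of `N`
onto `[rk]` maps `N` onto `H`. -/
def ContainsCopy (r k : ℕ) (H M : Finset (Finset ℕ)) : Prop :=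
  ∃ N ⊆ M, N.card = k ∧ ∃ φ : ℕ → ℕ,
    StrictMonoOn φ ↑(N.biUnion id) ∧
    (N.biUnion id).image φ = Finset.Icc 1 (r * k) ∧
    N.image (fun e => e.image φ) = H

/-- Delete the `j`-th smallest element of the finite set `e`. -/
def deleteJth (j : ℕ) (e : Finset ℕ) : Finset ℕ :=
  e.filter (fun x => (e.filter (· ≤ x)).card ≠ j)

/-- Relabel the elements of `e` order-preservingly by their ranks in `V`. -/
def relabel (V : Finset ℕ) (e : Finset ℕ) : Finset ℕ :=
  e.image (fun x => (V.filter (· ≤ x)).card)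

/-- `S^(−j)`: delete from each edge of the pattern `S` its `j`-th smallest element and
relabel the remaining vertices order-preservingly. -/
def patternDelete (j : ℕ) (S : Finset (Finset ℕ)) : Finset (Finset ℕ) :=
  (S.image (deleteJth j)).image (relabel ((S.image (deleteJth j)).biUnion id))



/-- index of the block containing coordinate `a` -/
def hblk : List ℕ → ℕ → ℕ
  | [], _ => 0
  | t :: l, a => if a < t then 0 else hblk l (a - t) + 1

/-- position in the word of the `a`-th letter equal to `c` -/
def hpos (c : Bool) : List ℕ → List Bool → ℕ → ℕ
  | t :: l, b :: bs, a => if a < t then (if b = c then a else t + a) else 2 * t + hpos c l bs (a - t)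
  | _, _, _ => 0

def hword (lam : List ℕ) (bs : List Bool) : List Bool :=
  (List.zipWith (fun t b => List.replicate t b ++ List.replicate t !b) lam bs).flatten

lemma hword_cons (t : ℕ) (l : List ℕ) (b : Bool) (bs : List Bool) :
    hword (t :: l) (b :: bs) = (List.replicate t b ++ List.replicate t !b) ++ hword l bs := by
  simp [hword]

lemma hword_length (lam : List ℕ) : ∀ bs : List Bool, bs.length = lam.length →
    (hword lam bs).length = 2 * lam.sum := by
  induction lam with
  | nil => intro bs _; simp [hword]
  | cons t l ih =>
    intro bs h
    cases bs with
    | nil => simp at h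
    | cons b bs =>
      rw [hword_cons, List.length_append, ih bs (by simpa using h)]
      simp; ring

lemma hblk_le (lam : List ℕ) (h : ∀ t ∈ lam, 1 ≤ t) : ∀ a, hblk lam a ≤ a := by
  induction lam with
  | nil => intro a; simp [hblk]
  | cons t l ih =>
    intro a
    have ht := h t (by simp)
    have := ih (fun s hs => h s (by simp [hs])) (a - t)
    simp only [hblk]; split_ifs <;> omega

lemma hblk_mono (lam : List ℕ) : ∀ a b, a ≤ b → hblk lam a ≤ hblk lam b := by
  induction lam with
  | nil => intro a b _; simp [hblk]
  | cons t l ih =>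
    intro a b hab
    have := ih (a - t) (b - t) (by omega)
    simp only [hblk]; split_ifs <;> omega

lemma hpos_spec (c : Bool) (lam : List ℕ) : ∀ bs : List Bool, bs.length = lam.length →
    ∀ a, a < lam.sum → (hword lam bs)[hpos c lam bs a]? = some c := by
  induction lam with
  | nil => intro bs _ a ha; simp at ha
  | cons t l ih =>
    intro bs h a ha
    cases bs with
    | nil => simp at h
    | cons b bs =>
      rw [hword_cons]
      simp only [hpos]
      by_cases hat : a < t
      · by_cases hb : b = c
        · subst hb
          rw [if_pos hat, if_pos rfl]
          grind
        · rw [if_pos hat, if_neg hb]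
          have : (!b) = c := by cases b <;> cases c <;> simp_all
          grind
      · rw [if_neg hat]
        have := ih bs (by simpa using h) (a - t) (by simp at ha; omega)
        rw [List.getElem?_append_right (by simp; omega)]
        simp only [List.length_append, List.length_replicate]
        rw [show 2 * t + hpos c l bs (a - t) - (t + t) = hpos c l bs (a - t) by omega]
        exact this

lemma hpos_mono (c : Bool) (lam : List ℕ) : ∀ bs : List Bool, bs.length = lam.length →
    ∀ a b, a < b → b < lam.sum → hpos c lam bs a < hpos c lam bs b := by
  induction lam with
  | nil => intro bs _ a b _ ha; simp at ha
  | cons t l ih =>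
    intro bs h a b' hab hb
    cases bs with
    | nil => simp at h
    | cons b bs =>
      have h1 := ih bs (by simpa using h) (a - t) (b' - t)
      simp only [List.sum_cons] at hb
      simp only [hpos]
      split_ifs <;> grind

lemma hpos_cmp (lam : List ℕ) : ∀ bs : List Bool, bs.length = lam.length →
    ∀ a b, a < lam.sum → b < lam.sum →
      (hpos true lam bs a < hpos false lam bs b ↔
        (hblk lam a < hblk lam b ∨ hblk lam a = hblk lam b ∧ bs.getD (hblk lam a) true = true)) := by
  induction lam with
  | nil => intro bs _ a b ha; simp at ha
  | cons t l ih =>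
    intro bs h a b' ha hb
    cases bs with
    | nil => simp at h
    | cons b bs =>
      have h1 := ih bs (by simpa using h) (a - t) (b' - t)
      simp only [List.sum_cons] at ha hb
      simp only [hpos, hblk]
      by_cases h2 : a < t <;> by_cases h3 : b' < t
      · cases b <;> simp [h2, h3] <;> omega
      · simp only [h2, h3, if_true, if_false]
        constructor
        · intro _; left; omega
        · intro _; split_ifs <;> omega
      · simp only [h2, h3, if_true, if_false]
        constructor
        · intro h; split_ifs at h <;> omega
        · intro h; omega
      · simp only [h2, h3, if_true, if_false]
        have h4 := h1 (by omega) (by omega)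
        simp only [List.getD_cons_succ]
        simp only [add_lt_add_iff_left, add_lt_add_iff_right, add_left_inj]
        exact h4

/-- Structural description of a pattern with blocks `bl` and signs `sg`. -/
def PatStruct (r : ℕ) (P : Finset (Finset ℕ)) (bl : ℕ → ℕ) (sg : ℕ → Bool) : Prop :=
  ∃ α β : Fin r → ℕ, StrictMono α ∧ StrictMono β ∧
    P = {univ.image α, univ.image β} ∧ univ.image α ∪ univ.image β = Icc 1 (2 * r) ∧
    (∀ a b, α a ≠ β b) ∧
    ∀ a b : Fin r, α a < β b ↔ (bl a < bl b ∨ bl a = bl b ∧ sg a = true)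

lemma patStruct_of_comp (r : ℕ) (hr : 2 ≤ r) (P : Finset (Finset ℕ)) (hP : IsOrderedMatching r 2 P)
    (lam : List ℕ) (h : HasComposition r P lam) :
    ∃ sg : ℕ → Bool, PatStruct r P (hblk lam) sg ∧ sg 0 = true ∧
      ∀ a b, hblk lam a = hblk lam b → sg a = sg b := by
  obtain ⟨h1, bs, hbs, hw⟩ := h
  change patternWord r P = hword lam bs at hw
  have hlen : lam.sum = r := by
    have := hword_length lam bs hbs
    rw [← hw] at this
    simp [patternWord] at this
    omega
  obtain ⟨hc, hcr, hdis, hun⟩ := hP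
  -- the edge containing 1
  have h1mem : (1 : ℕ) ∈ P.biUnion id := by rw [hun]; simp; omega
  simp only [mem_biUnion, id] at h1mem
  obtain ⟨A, hA, h1A⟩ := h1mem
  obtain ⟨x, y, hxy, hPxy⟩ := card_eq_two.1 hc
  have : ∃ B, A ≠ B ∧ P = {A, B} := by
    rw [hPxy] at hA
    simp only [mem_insert, mem_singleton] at hA
    rcases hA with rfl | rfl
    · exact ⟨y, hxy, hPxy⟩
    · exact ⟨x, hxy.symm, by rw [hPxy, pair_comm]⟩
  obtain ⟨B, hAB, hPAB⟩ := this
  have hB : B ∈ P := by rw [hPAB]; simp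
  have hd := hdis A hA B hB hAB
  have hU : A ∪ B = Icc 1 (2 * r) := by
    rw [mul_comm, ← hun, hPAB]; simp
  have hmemA : ∀ j, j < 2 * r → ((patternWord r P)[j]? = some true ↔ j + 1 ∈ A) := by
    intro j hj
    simp only [patternWord, List.getElem?_map, List.getElem?_range hj, Option.map_some,
      Option.some.injEq, decide_eq_true_eq]
    constructor
    · rintro ⟨e, he, h1e, hje⟩
      by_cases heA : e = A
      · rwa [← heA]
      · exact absurd h1A (Finset.disjoint_left.1 (hdis e he A hA heA) h1e)
    · intro h; exact ⟨A, hA, h1A, h⟩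
  have hposlt : ∀ c a, a < r → hpos c lam bs a < 2 * r := by
    intro c a ha
    have h2 := hpos_spec c lam bs hbs a (by omega)
    obtain ⟨h3, _⟩ := List.getElem?_eq_some_iff.1 h2
    rw [hword_length lam bs hbs] at h3
    omega
  refine ⟨fun a => bs.getD (hblk lam a) true, ⟨fun a => hpos true lam bs a + 1,
    fun a => hpos false lam bs a + 1, ?_, ?_, ?_⟩, ?_, ?_⟩
  · intro a b hab
    have := hpos_mono true lam bs hbs a b hab (by have := b.2; omega)
    simp only; omega
  · intro a b hab
    have := hpos_mono false lam bs hbs a b hab (by have := b.2; omega)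
    simp only; omega
  · have hinj : ∀ c, Function.Injective (fun a : Fin r => hpos c lam bs a + 1) := by
      intro c
      apply StrictMono.injective
      intro a b hab
      have := hpos_mono c lam bs hbs a b hab (by have := b.2; omega)
      simp only; omega
    have e1 : univ.image (fun a : Fin r => hpos true lam bs a + 1) = A := by
      apply eq_of_subset_of_card_le
      · intro x hx
        simp only [mem_image, mem_univ, true_and] at hx
        obtain ⟨a, rfl⟩ := hx
        rw [← hmemA _ (hposlt true a a.2), hw]
        exact hpos_spec true lam bs hbs a (by have := a.2; omega)
      · rw [hcr A hA, card_image_of_injective _ (hinj true)]; simp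
    have e2 : univ.image (fun a : Fin r => hpos false lam bs a + 1) = B := by
      apply eq_of_subset_of_card_le
      · intro x hx
        simp only [mem_image, mem_univ, true_and] at hx
        obtain ⟨a, rfl⟩ := hx
        have hx : hpos false lam bs a + 1 ∈ A ∪ B := by
          rw [hU]; simp; have := hposlt false a a.2; omega
        rcases mem_union.1 hx with h | h
        · rw [← hmemA _ (hposlt false a a.2), hw,
            hpos_spec false lam bs hbs a (by have := a.2; omega)] at h
          simp at h
        · exact h
      · rw [hcr B hB, card_image_of_injective _ (hinj false)]; simp
    rw [e1, e2]
    refine ⟨hPAB, hU, ?_, ?_⟩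
    · intro a b hab
      have ha : hpos true lam bs a + 1 ∈ A := by rw [← e1]; exact mem_image_of_mem _ (mem_univ a)
      have hb : hpos false lam bs b + 1 ∈ B := by
        rw [← e2]; exact mem_image_of_mem (fun a : Fin r => hpos false lam bs a + 1) (mem_univ b)
      simp only at hab
      rw [hab] at ha
      exact Finset.disjoint_left.1 hd ha hb
    · intro a b
      have := hpos_cmp lam bs hbs a b (by have := a.2; omega) (by have := b.2; omega)
      rw [← this]; simp
  · have hb0 : hblk lam 0 = 0 := by have := hblk_le lam h1 0; omega
    simp only [hb0]
    have hA0 := (hmemA 0 (by omega)).2 h1A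
    rw [hw] at hA0
    cases lam with
    | nil => simp at hlen; omega
    | cons t l =>
      cases bs with
      | nil => simp
      | cons b bs =>
        have ht := h1 t (by simp)
        rw [hword_cons] at hA0
        simp only [List.getD_cons_zero]
        grind
  · intro a b hab; simp only [hab]


/-- the comparison relation of a pattern -/
def HRel (bl : ℕ → ℕ) (sg : ℕ → Bool) (a b : ℕ) : Prop :=
  bl a < bl b ∨ bl a = bl b ∧ sg a = true

lemma eq_of_cmp {ι : Type*} [Fintype ι] (f g : ι → ℕ) (hf : Function.Injective f)
    (hg : Function.Injective g) (him : univ.image f = univ.image g)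
    (hcmp : ∀ i j, f i < f j ↔ g i < g j) : f = g := by
  funext i
  have key : ∀ (f : ι → ℕ), Function.Injective f → ∀ i,
      ((univ.image f).filter (· < f i)).card = (univ.filter (fun j => f j < f i)).card := by
    intro f hf i
    rw [filter_image, card_image_of_injective _ hf]
  have h1 := key f hf i
  have h2 := key g hg i
  have h3 : (univ.filter (fun j => f j < f i)) = (univ.filter (fun j => g j < g i)) := by
    ext j; simp [hcmp]
  rw [h3, ← h2, him] at h1
  have hfi : f i ∈ univ.image g := by rw [← him]; exact mem_image_of_mem _ (mem_univ _)
  have hgi : g i ∈ univ.image g := mem_image_of_mem _ (mem_univ _)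
  have mono : ∀ (W : Finset ℕ) x y, x ∈ W → x < y →
      (W.filter (· < x)).card < (W.filter (· < y)).card := by
    intro W x y hx hxy
    apply card_lt_card
    refine ⟨fun z hz => ?_, fun h => ?_⟩
    · simp only [mem_filter] at hz ⊢; exact ⟨hz.1, hz.2.trans hxy⟩
    · have := h (mem_filter.2 ⟨hx, hxy⟩)
      simp at this
  rcases lt_trichotomy (f i) (g i) with h | h | h
  · have := mono _ _ _ hfi h; omega
  · exact h
  · have := mono _ _ _ hgi h; omega

lemma image_fin_inj {r : ℕ} {x y : Fin r → ℕ} (hx : StrictMono x) (hy : StrictMono y)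
    (h : univ.image x = univ.image y) : x = y := by
  apply (StrictMono.range_inj hx hy).1
  have := congrArg (fun s : Finset ℕ => (s : Set ℕ)) h
  simpa using this

lemma formsPattern_fwd {r : ℕ} {P : Finset (Finset ℕ)} {bl sg} (hS : PatStruct r P bl sg)
    {x y : Fin r → ℕ} (hx : StrictMono x) (hy : StrictMono y)
    (h : FormsPattern r (univ.image x) (univ.image y) P) :
    (∀ a b : Fin r, x a < y b ↔ HRel bl sg a b) ∨ (∀ a b : Fin r, y a < x b ↔ HRel bl sg a b) := by
  obtain ⟨α, β, hα, hβ, hP, hU, hne, hcmp⟩ := hS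
  obtain ⟨φ, hφ, him, hpr⟩ := h
  have mx : ∀ a, x a ∈ ((univ.image x ∪ univ.image y : Finset ℕ) : Set ℕ) := by intro a; simp
  have my : ∀ a, y a ∈ ((univ.image x ∪ univ.image y : Finset ℕ) : Set ℕ) := by intro a; simp
  have h1 : StrictMono (φ ∘ x) := fun a b hab => hφ (mx a) (mx b) (hx hab)
  have h2 : StrictMono (φ ∘ y) := fun a b hab => hφ (my a) (my b) (hy hab)
  rw [image_image, image_image, hP] at hpr
  have hxy : ∀ a b, x a < y b ↔ φ (x a) < φ (y b) := fun a b => (hφ.lt_iff_lt (mx a) (my b)).symm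
  have hyx : ∀ a b, y a < x b ↔ φ (y a) < φ (x b) := fun a b => (hφ.lt_iff_lt (my a) (mx b)).symm
  have hset := hpr
  have ha : univ.image (φ ∘ x) = univ.image α ∧ univ.image (φ ∘ y) = univ.image β ∨
      univ.image (φ ∘ x) = univ.image β ∧ univ.image (φ ∘ y) = univ.image α := by
    generalize univ.image (φ ∘ x) = A at *
    generalize univ.image (φ ∘ y) = B at *
    generalize univ.image α = C at *
    generalize univ.image β = D at *
    have q1 : A ∈ ({C, D} : Finset (Finset ℕ)) := by rw [← hpr]; simp
    have q2 : B ∈ ({C, D} : Finset (Finset ℕ)) := by rw [← hpr]; simp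
    have q3 : C ∈ ({A, B} : Finset (Finset ℕ)) := by rw [hpr]; simp
    have q4 : D ∈ ({A, B} : Finset (Finset ℕ)) := by rw [hpr]; simp
    simp only [mem_insert, mem_singleton] at q1 q2 q3 q4
    grind
  rcases ha with ⟨e1, e2⟩ | ⟨e1, e2⟩
  · left
    have e1 := image_fin_inj h1 hα e1
    have e2 := image_fin_inj h2 hβ e2
    intro a b
    rw [hxy]
    have := hcmp a b
    rw [← e1, ← e2] at this
    exact this
  · right
    have e1 := image_fin_inj h1 hβ e1
    have e2 := image_fin_inj h2 hα e2
    intro a b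
    rw [hyx]
    have := hcmp a b
    rw [← e1, ← e2] at this
    exact this

lemma formsPattern_symm {r : ℕ} {P : Finset (Finset ℕ)} {e f : Finset ℕ}
    (h : FormsPattern r e f P) : FormsPattern r f e P := by
  obtain ⟨φ, h1, h2, h3⟩ := h
  exact ⟨φ, by rwa [union_comm], by rwa [union_comm], by rwa [pair_comm]⟩

lemma formsPattern_bwd {r : ℕ} {P : Finset (Finset ℕ)} {bl sg} (hS : PatStruct r P bl sg)
    {x y : Fin r → ℕ} (hx : StrictMono x) (hy : StrictMono y) (hxy : ∀ a b, x a ≠ y b)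
    (h : ∀ a b : Fin r, x a < y b ↔ HRel bl sg a b) :
    FormsPattern r (univ.image x) (univ.image y) P := by
  obtain ⟨α, β, hα, hβ, hP, hU, hne, hcmp⟩ := hS
  have hzinj : Function.Injective (Sum.elim x y) :=
    hx.injective.sumElim hy.injective hxy
  let φ : ℕ → ℕ := Function.extend (Sum.elim x y) (Sum.elim α β) 0
  have hφ : ∀ s, φ (Sum.elim x y s) = Sum.elim α β s := fun s => hzinj.extend_apply _ _ s
  have hφx : φ ∘ x = α := by funext a; exact hφ (Sum.inl a)
  have hφy : φ ∘ y = β := by funext a; exact hφ (Sum.inr a)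
  have hlt : ∀ a b, x a < y b → α a < β b := fun a b hh => (hcmp a b).2 ((h a b).1 hh)
  have hgt : ∀ a b, y a < x b → β a < α b := by
    intro a b hh
    have : ¬ α b < β a := by
      rw [hcmp b a]; intro h'; have := (h b a).2 h'; omega
    have := hne b a
    omega
  refine ⟨φ, ?_, ?_, ?_⟩
  · intro u hu v hv huv
    simp only [coe_union, coe_image, coe_univ, Set.image_univ, Set.mem_union, Set.mem_range] at hu hv
    rcases hu with ⟨a, rfl⟩ | ⟨a, rfl⟩ <;> rcases hv with ⟨b, rfl⟩ | ⟨b, rfl⟩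
    · have e1 := congrFun hφx a; have e2 := congrFun hφx b
      simp only [Function.comp] at e1 e2; rw [e1, e2]; exact hα (hx.lt_iff_lt.1 huv)
    · have e1 := congrFun hφx a; have e2 := congrFun hφy b
      simp only [Function.comp] at e1 e2; rw [e1, e2]; exact hlt _ _ huv
    · have e1 := congrFun hφy a; have e2 := congrFun hφx b
      simp only [Function.comp] at e1 e2; rw [e1, e2]; exact hgt _ _ huv
    · have e1 := congrFun hφy a; have e2 := congrFun hφy b
      simp only [Function.comp] at e1 e2; rw [e1, e2]; exact hβ (hy.lt_iff_lt.1 huv)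
  · rw [image_union, image_image, image_image, hφx, hφy, hU]
  · rw [image_image, image_image, hφx, hφy, hP]

lemma patStruct_unique {r : ℕ} {P Q : Finset (Finset ℕ)} {bl sg sg'} (hS : PatStruct r P bl sg)
    (hS' : PatStruct r Q bl sg') (h : ∀ a, a < r → sg a = sg' a) : P = Q := by
  obtain ⟨α, β, hα, hβ, hP, hU, hne, hcmp⟩ := hS
  obtain ⟨α', β', hα', hβ', hP', hU', hne', hcmp'⟩ := hS'
  have key : ∀ a b, α a < β b ↔ α' a < β' b := by
    intro a b; rw [hcmp, hcmp', h a a.2]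
  have himg : ∀ (u v : Fin r → ℕ), univ.image (Sum.elim u v) = univ.image u ∪ univ.image v := by
    intro u v; ext z; simp
  have : Sum.elim α β = Sum.elim α' β' := by
    apply eq_of_cmp
    · exact hα.injective.sumElim hβ.injective hne
    · exact hα'.injective.sumElim hβ'.injective hne'
    · rw [himg, himg, hU, hU']
    · rintro (a | a) (b | b)
      · simp [hα.lt_iff_lt, hα'.lt_iff_lt]
      · simpa using key a b
      · have := key b a; have := hne b a; have := hne' b a
        simp only [Sum.elim_inl, Sum.elim_inr]; omega
      · simp [hβ.lt_iff_lt, hβ'.lt_iff_lt]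
  have e1 : α = α' := by funext a; exact congrFun this (Sum.inl a)
  have e2 : β = β' := by funext a; exact congrFun this (Sum.inr a)
  rw [hP, hP', e1, e2]


/-- perfect `r`-matchings on the vertex set `U` -/
noncomputable def Mat (r : ℕ) (U : Finset ℕ) : Finset (Finset (Finset ℕ)) :=
  (U.powerset.powerset).filter (fun M => (∀ e ∈ M, e.card = r) ∧
    (∀ e ∈ M, ∀ f ∈ M, e ≠ f → Disjoint e f) ∧ M.biUnion id = U)

lemma mem_Mat {r : ℕ} {U : Finset ℕ} {M : Finset (Finset ℕ)} :
    M ∈ Mat r U ↔ (∀ e ∈ M, e.card = r) ∧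
    (∀ e ∈ M, ∀ f ∈ M, e ≠ f → Disjoint e f) ∧ M.biUnion id = U := by
  unfold Mat
  rw [mem_filter]
  refine ⟨fun h => h.2, fun h => ⟨?_, h⟩⟩
  rw [mem_powerset]
  intro e he
  rw [mem_powerset, ← h.2.2]
  exact subset_biUnion_of_mem id he

lemma card_biUnion_of {r : ℕ} {M : Finset (Finset ℕ)} (h1 : ∀ e ∈ M, e.card = r)
    (h2 : ∀ e ∈ M, ∀ f ∈ M, e ≠ f → Disjoint e f) : (M.biUnion id).card = r * M.card := by
  rw [card_biUnion (t := id) (fun e he f hf hef => h2 e he f hf hef)]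
  simp only [id]
  rw [sum_congr rfl h1]; simp [mul_comm]

lemma matchingFamilies_eq (r n : ℕ) (hr : 1 ≤ r) : matchingFamilies r n = Mat r (Icc 1 (r * n)) := by
  ext M
  unfold matchingFamilies
  rw [mem_filter, mem_Mat]
  constructor
  · rintro ⟨_, h⟩; exact h.2
  · intro h
    refine ⟨?_, ?_, h⟩
    · rw [mem_powerset]
      intro e he
      rw [mem_powerset, ← h.2.2]
      exact subset_biUnion_of_mem id he
    · have := card_biUnion_of h.1 h.2.1
      rw [h.2.2] at this
      simp at this
      rcases this with h | h <;> omega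

/-- removing the edge at `v` -/
lemma Mat_rec (r : ℕ) (U : Finset ℕ) (v : ℕ) (hv : v ∈ U) (B : Finset (Finset ℕ) → Prop) :
    ((Mat r U).filter B).card =
      ∑ e ∈ (U.powersetCard r).filter (fun e => v ∈ e),
        ((Mat r (U \ e)).filter (fun M => B (insert e M))).card := by
  rw [← card_sigma]
  symm
  have hnot : ∀ e, v ∈ e → ∀ M ∈ Mat r (U \ e), e ∉ M := by
    intro e hve M hM heM
    rw [mem_Mat] at hM
    have : v ∈ U \ e := by rw [← hM.2.2]; exact mem_biUnion.2 ⟨e, heM, hve⟩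
    simp [hve] at this
  refine card_bij (fun s _ => insert s.1 s.2) ?_ ?_ ?_
  · rintro ⟨e, M⟩ h
    simp only [mem_sigma, mem_filter, mem_powersetCard] at h ⊢
    obtain ⟨⟨⟨heU, her⟩, hve⟩, hM, hB⟩ := h
    refine ⟨?_, hB⟩
    rw [mem_Mat] at hM ⊢
    have hd : ∀ f ∈ M, Disjoint e f := by
      intro f hf
      have : f ⊆ U \ e := by rw [← hM.2.2]; exact subset_biUnion_of_mem id hf
      exact (disjoint_sdiff).mono_right this
    refine ⟨?_, ?_, ?_⟩
    · intro f hf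
      rcases mem_insert.1 hf with rfl | hf
      · exact her
      · exact hM.1 f hf
    · intro f hf g hg hfg
      rcases mem_insert.1 hf with rfl | hf' <;> rcases mem_insert.1 hg with rfl | hg'
      · exact absurd rfl hfg
      · exact hd g hg'
      · exact (hd f hf').symm
      · exact hM.2.1 f hf' g hg' hfg
    · rw [biUnion_insert, hM.2.2]; simpa using heU
  · rintro ⟨e, M⟩ h ⟨e', M'⟩ h' heq
    simp only [mem_sigma, mem_filter, mem_powersetCard] at h h' heq
    have hn := hnot e h.1.2 M h.2.1
    have hn' := hnot e' h'.1.2 M' h'.2.1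
    have hee : e = e' := by
      have : e ∈ insert e' M' := by rw [← heq]; simp
      rcases mem_insert.1 this with h1 | h1
      · exact h1
      · have h2 : v ∈ U \ e' := by
          rw [← (mem_Mat.1 h'.2.1).2.2]; exact mem_biUnion.2 ⟨e, h1, h.1.2⟩
        simp [h'.1.2] at h2
    subst hee
    have : M = M' := by
      rw [← erase_insert hn, heq, erase_insert hn']
    subst this
    rfl
  · intro M hM
    rw [mem_filter, mem_Mat] at hM
    obtain ⟨⟨h1, h2, h3⟩, hB⟩ := hM
    have : v ∈ M.biUnion id := by rw [h3]; exact hv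
    obtain ⟨e, heM, hve⟩ := mem_biUnion.1 this
    simp only [id] at hve
    refine ⟨⟨e, M.erase e⟩, ?_, insert_erase heM⟩
    simp only [mem_sigma, mem_filter, mem_powersetCard]
    refine ⟨⟨⟨?_, h1 e heM⟩, hve⟩, ?_, by rwa [insert_erase heM]⟩
    · rw [← h3]; exact subset_biUnion_of_mem id heM
    · rw [mem_Mat]
      refine ⟨fun f hf => h1 f (mem_of_mem_erase hf), fun f hf g hg => h2 f (mem_of_mem_erase hf) g
        (mem_of_mem_erase hg), ?_⟩
      ext z
      simp only [mem_biUnion, mem_erase, id, mem_sdiff]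
      constructor
      · rintro ⟨f, ⟨hfe, hf⟩, hz⟩
        refine ⟨by rw [← h3]; exact mem_biUnion.2 ⟨f, hf, hz⟩, fun hze => ?_⟩
        exact disjoint_left.1 (h2 f hf e heM hfe) hz hze
      · rintro ⟨hzU, hze⟩
        rw [← h3] at hzU
        obtain ⟨f, hf, hz⟩ := mem_biUnion.1 hzU
        refine ⟨f, ⟨?_, hf⟩, hz⟩
        rintro rfl
        exact hze hz

lemma card_edges_at (r : ℕ) (hr : 1 ≤ r) (U : Finset ℕ) (v : ℕ) (hv : v ∈ U) :
    ((U.powersetCard r).filter (fun e => v ∈ e)).card = (U.card - 1).choose (r - 1) := by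
  rw [← card_erase_of_mem hv, ← card_powersetCard]
  symm
  refine card_bij (fun e _ => insert v e) ?_ ?_ ?_
  · intro e he
    rw [mem_powersetCard] at he
    have hve : v ∉ e := fun h => by simpa using he.1 h
    rw [mem_filter, mem_powersetCard, card_insert_of_notMem hve]
    refine ⟨⟨insert_subset hv (he.1.trans (erase_subset _ _)), by omega⟩, by simp⟩
  · intro e he f hf hef
    rw [mem_powersetCard] at he hf
    have hve : v ∉ e := fun h => by simpa using he.1 h
    have hvf : v ∉ f := fun h => by simpa using hf.1 h
    rw [← erase_insert hve, hef, erase_insert hvf]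
  · intro e he
    rw [mem_filter, mem_powersetCard] at he
    refine ⟨e.erase v, ?_, insert_erase he.2⟩
    rw [mem_powersetCard, card_erase_of_mem he.2, he.1.2]
    exact ⟨erase_subset_erase _ he.1.1, rfl⟩

/-- number of matchings -/
def mcount (r : ℕ) : ℕ → ℕ
  | 0 => 1
  | n + 1 => (r * (n + 1) - 1).choose (r - 1) * mcount r n

lemma card_Mat (r : ℕ) (hr : 1 ≤ r) (n : ℕ) : ∀ U : Finset ℕ, U.card = r * n →
    (Mat r U).card = mcount r n := by
  induction n with
  | zero =>
    intro U hU
    simp only [mul_zero, card_eq_zero] at hU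
    subst hU
    rw [mcount, card_eq_one]
    refine ⟨∅, ?_⟩
    ext M
    rw [mem_Mat, mem_singleton]
    constructor
    · rintro ⟨h1, h2, h3⟩
      rw [eq_empty_iff_forall_notMem]
      intro e he
      have h4 : e ⊆ ∅ := by rw [← h3]; exact subset_biUnion_of_mem id he
      have := h1 e he
      rw [subset_empty.1 h4] at this
      simp at this; omega
    · rintro rfl; simp
  | succ n ih =>
    intro U hU
    have : 0 < U.card := by rw [hU]; positivity
    obtain ⟨v, hv⟩ := card_pos.1 this
    have h := Mat_rec r U v hv (fun _ => True)
    simp only [filter_true] at h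
    rw [h, mcount, ← hU, ← card_edges_at r hr U v hv, ← smul_eq_mul, ← sum_const]
    apply sum_congr rfl
    intro e he
    rw [mem_filter, mem_powersetCard] at he
    apply ih
    rw [card_sdiff_of_subset he.1.1, hU, he.1.2, mul_add, mul_one, Nat.add_sub_cancel]

lemma mcount_pos (r : ℕ) (hr : 1 ≤ r) (n : ℕ) : 0 < mcount r n := by
  induction n with
  | zero => simp [mcount]
  | succ n ih =>
    rw [mcount]
    apply Nat.mul_pos _ ih
    apply Nat.choose_pos
    have : r ≤ r * (n + 1) := Nat.le_mul_of_pos_right _ (by omega)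
    omega

lemma mcount_formula (r : ℕ) (hr : 1 ≤ r) (n : ℕ) :
    mcount r n * (r.factorial ^ n * n.factorial) = (r * n).factorial := by
  induction n with
  | zero => simp [mcount]
  | succ n ih =>
    obtain ⟨s, rfl⟩ : ∃ s, r = s + 1 := ⟨r - 1, by omega⟩
    have h1 := Nat.add_choose_mul_factorial_mul_factorial ((s + 1) * n) s
    rw [mcount]
    have e1 : (s + 1) * (n + 1) - 1 = (s + 1) * n + s := by
      rw [mul_add, mul_one]; omega
    have e2 : (s + 1) * (n + 1) = ((s + 1) * n + s) + 1 := by ring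
    rw [e1]
    rw [e2, Nat.factorial_succ ((s + 1) * n + s), ← h1, Nat.factorial_succ n, pow_succ, ← ih,
      Nat.factorial_succ s, Nat.add_sub_cancel]
    ring

/-- matchings containing a given partial matching -/
lemma card_containing (r : ℕ) (U : Finset ℕ) (K : Finset (Finset ℕ)) :
    ((Mat r U).filter (fun M => K ⊆ M)).card ≤ (Mat r (U \ K.biUnion id)).card := by
  apply card_le_card_of_injOn (fun M => M \ K)
  · intro M hM
    simp only [coe_filter, Set.mem_ofPred_eq] at hM
    obtain ⟨hM, hK⟩ := hM
    rw [mem_Mat] at hM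
    rw [mem_coe, mem_Mat]
    refine ⟨fun e he => hM.1 e (sdiff_subset he), fun e he f hf =>
      hM.2.1 e (sdiff_subset he) f (sdiff_subset hf), ?_⟩
    ext z
    simp only [mem_biUnion, mem_sdiff, id]
    constructor
    · rintro ⟨f, ⟨hf, hfK⟩, hz⟩
      refine ⟨by rw [← hM.2.2]; exact mem_biUnion.2 ⟨f, hf, hz⟩, ?_⟩
      rintro ⟨g, hg, hzg⟩
      have hne : f ≠ g := by rintro rfl; exact hfK hg
      exact disjoint_left.1 (hM.2.1 f hf g (hK hg) hne) hz hzg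
    · rintro ⟨hz, hn⟩
      rw [← hM.2.2] at hz
      obtain ⟨f, hf, hzf⟩ := mem_biUnion.1 hz
      exact ⟨f, ⟨hf, fun h => hn ⟨f, h, hzf⟩⟩, hzf⟩
  · intro M hM M' hM' h
    simp only [coe_filter, Set.mem_ofPred_eq] at hM hM' h
    rw [← sdiff_union_of_subset hM.2, h, sdiff_union_of_subset hM'.2]

/-- no extension of `K` by edges of `M` to size `k` -/
def HFail (Cl : Finset (Finset ℕ) → Prop) (k : ℕ) (K M : Finset (Finset ℕ)) : Prop :=
  ¬ ∃ N ⊆ M, Cl (K ∪ N) ∧ k ≤ (K ∪ N).card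

/-- greedy exposure lemma -/
lemma greedy (r : ℕ) (hr : 1 ≤ r) (V : Finset ℕ) (k T : ℕ) (p : ℝ) (_hp0 : 0 ≤ p) (hp1 : p ≤ 1)
    (Cl : Finset (Finset ℕ) → Prop)
    (H : ∀ U K, U ⊆ V → V.card ≤ U.card + r * T → (∀ e ∈ K, Disjoint e U) → Cl K → K.card < k →
      ∃ v ∈ U, p * ((U.card - 1).choose (r - 1) : ℕ) ≤
        (((U.powersetCard r).filter (fun e => v ∈ e)).filter (fun e => Cl (insert e K))).card) :
    ∀ t, ∀ U K n, t ≤ T → U ⊆ V → U.card = r * n → V.card ≤ U.card + r * (T - t) →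
      (∀ e ∈ K, Disjoint e U) → Cl K → 
      (((Mat r U).filter (fun M => HFail Cl k K M)).card : ℝ) ≤
        (2 ^ k / 2 ^ K.card) * (1 - p / 2) ^ t * mcount r n := by
  have hbig : ∀ U K t n, Cl K → k ≤ K.card →
      (((Mat r U).filter (fun M => HFail Cl k K M)).card : ℝ) ≤
        (2 ^ k / 2 ^ K.card) * (1 - p / 2) ^ t * mcount r n := by
    intro U K t n hCl hk
    rw [filter_false_of_mem]
    · have : 0 ≤ 1 - p / 2 := by linarith
      simp only [card_empty, Nat.cast_zero]; positivity
    · intro M hM h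
      exact h ⟨∅, by simp, by simpa using hCl, by simpa using hk⟩
  intro t
  induction t with
  | zero =>
    intro U K n hT hUV hUn hV hdis hCl
    by_cases hk : k ≤ K.card
    · exact hbig U K 0 n hCl hk
    · rw [← card_Mat r hr n U hUn]
      have h1 : (((Mat r U).filter (fun M => HFail Cl k K M)).card : ℝ) ≤
        (Mat r U).card := by exact_mod_cast card_filter_le _ _
      have h2 : (1 : ℝ) ≤ 2 ^ k / 2 ^ K.card := by
        rw [le_div_iff₀ (by positivity), one_mul]
        exact pow_le_pow_right₀ (by norm_num) (by omega)
      rw [pow_zero, mul_one]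
      calc _ ≤ _ := h1
        _ ≤ _ := le_mul_of_one_le_left (by positivity) h2
  | succ t ih =>
    intro U K n hT hUV hUn hV hdis hCl
    by_cases hk : k ≤ K.card
    · exact hbig U K _ n hCl hk
    push Not at hk
    obtain ⟨v, hv, hvp⟩ := H U K hUV (hV.trans (by gcongr; omega)) hdis hCl hk
    have hUpos : 0 < U.card := card_pos.2 ⟨v, hv⟩
    obtain ⟨n, rfl⟩ : ∃ n', n = n' + 1 := by
      refine ⟨n - 1, ?_⟩
      have : n ≠ 0 := by rintro rfl; simp at hUn; simp [hUn] at hUpos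
      omega
    rw [Mat_rec r U v hv]
    push_cast
    set E := (U.powersetCard r).filter (fun e => v ∈ e) with hE
    set q : ℝ := (2 ^ k / 2 ^ K.card) * (1 - p / 2) ^ t * mcount r n with hq
    have hq0 : 0 ≤ q := by
      have : 0 ≤ 1 - p / 2 := by linarith
      positivity
    have hEc : E.card = (U.card - 1).choose (r - 1) := card_edges_at r hr U v hv
    have hterm : ∀ e ∈ E, ((((Mat r (U \ e)).filter (fun M => HFail Cl k K (insert e M))).card : ℕ) : ℝ) ≤ 
        if Cl (insert e K) then q / 2 else q := by
      intro e he
      rw [hE, mem_filter, mem_powersetCard] at he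
      obtain ⟨⟨heU, her⟩, hve⟩ := he
      have hc : (U \ e).card = r * n := by
        rw [card_sdiff_of_subset heU, hUn, her, mul_add, mul_one, Nat.add_sub_cancel]
      have hV' : V.card ≤ (U \ e).card + r * (T - t) := by
        rw [hc]
        have : r * (T - t) = r * (T - (t + 1)) + r := by
          rw [← Nat.mul_succ]; congr 1; omega
        rw [this]; rw [hUn] at hV; linarith [hV]
      have hsub : U \ e ⊆ V := sdiff_subset.trans hUV
      split_ifs with hcl
      · have hdis' : ∀ f ∈ insert e K, Disjoint f (U \ e) := by
          intro f hf
          rcases mem_insert.1 hf with rfl | hf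
          · exact disjoint_sdiff
          · exact (hdis f hf).mono_right sdiff_subset
        have := ih (U \ e) (insert e K) n (by omega) hsub hc hV' hdis' hcl
        have heK : e ∉ K := fun h => disjoint_left.1 (hdis e h) hve hv
        rw [card_insert_of_notMem heK] at this
        have e3 : q / 2 = (2 ^ k / 2 ^ (K.card + 1)) * (1 - p / 2) ^ t * mcount r n := by
          rw [hq, pow_succ]; field_simp
        rw [e3]
        refine le_trans ?_ this
        norm_cast
        apply card_le_card
        intro M hM
        rw [mem_filter] at hM ⊢
        refine ⟨hM.1, ?_⟩
        rintro ⟨N, hN, h1, h2⟩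
        refine hM.2 ⟨insert e N, insert_subset_insert _ hN, ?_⟩
        rw [union_insert, ← insert_union]
        exact ⟨h1, h2⟩
      · have hdis' : ∀ f ∈ K, Disjoint f (U \ e) := fun f hf => (hdis f hf).mono_right sdiff_subset
        refine le_trans ?_ (ih (U \ e) K n (by omega) hsub hc hV' hdis' hCl)
        norm_cast
        apply card_le_card
        intro M hM
        rw [mem_filter] at hM ⊢
        refine ⟨hM.1, ?_⟩
        rintro ⟨N, hN, h1⟩
        exact hM.2 ⟨N, hN.trans (subset_insert _ _), h1⟩
    refine (sum_le_sum hterm).trans ?_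
    have hsum : ∑ e ∈ E, (if Cl (insert e K) then q / 2 else q) =
        q * E.card - q / 2 * (E.filter (fun e => Cl (insert e K))).card := by
      have : ∀ e ∈ E, (if Cl (insert e K) then q / 2 else q) =
          q - (if Cl (insert e K) then q / 2 else 0) := by
        intro e _; split_ifs <;> ring
      rw [sum_congr rfl this, sum_sub_distrib, sum_const, ← sum_filter, sum_const]
      simp; ring
    rw [hsum]
    have hmul : q / 2 * (p * E.card) ≤ q / 2 * (E.filter (fun e => Cl (insert e K))).card := by
      apply mul_le_mul_of_nonneg_left _ (by positivity)
      rw [hEc]; exact hvp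
    have hfin : (2 ^ k / 2 ^ K.card) * (1 - p / 2) ^ (t + 1) * (mcount r (n + 1) : ℕ) =
        q * E.card * (1 - p / 2) := by
      rw [mcount, ← hUn, ← hEc, hq]; push_cast; ring
    rw [hfin]
    nlinarith


lemma exists_enum (r k : ℕ) (hr : 1 ≤ r) (K : Finset (Finset ℕ)) (h1 : ∀ e ∈ K, e.card = r)
    (h2 : ∀ e ∈ K, ∀ f ∈ K, e ≠ f → Disjoint e f) (hk : K.card = k) :
    ∃ x : Fin k → Fin r → ℕ, (∀ i, StrictMono (x i)) ∧ StrictMono (fun i => x i ⟨0, hr⟩) ∧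
      K = univ.image (fun i => univ.image (x i)) := by
  have : ∀ e : Finset ℕ, ∃ y : Fin r → ℕ, e ∈ K → StrictMono y ∧ univ.image y = e := by
    intro e
    by_cases he : e ∈ K
    · refine ⟨e.orderEmbOfFin (h1 e he), fun _ => ⟨(e.orderEmbOfFin (h1 e he)).strictMono, ?_⟩⟩
      apply coe_injective
      simp
    · exact ⟨0, fun h => absurd h he⟩
  choose y hy using this
  let m : Finset ℕ → ℕ := fun e => y e ⟨0, hr⟩
  have hm : ∀ e ∈ K, m e ∈ e := by
    intro e he
    have : m e ∈ univ.image (y e) := mem_image_of_mem _ (mem_univ _)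
    rwa [(hy e he).2] at this
  have hinj : Set.InjOn m K := by
    intro e he f hf hef
    by_contra hne
    have h3 := hm e he
    rw [hef] at h3
    exact disjoint_left.1 (h2 e he f hf hne) h3 (hm f hf)
  have hS : (K.image m).card = k := by rw [card_image_of_injOn hinj, hk]
  have : ∀ i : Fin k, ∃ e ∈ K, m e = (K.image m).orderEmbOfFin hS i := by
    intro i
    exact mem_image.1 ((K.image m).orderEmbOfFin_mem hS i)
  choose e heK he using this
  refine ⟨fun i => y (e i), fun i => (hy _ (heK i)).1, ?_, ?_⟩
  · have : (fun i => y (e i) ⟨0, hr⟩) = (K.image m).orderEmbOfFin hS := by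
      funext i; exact he i
    rw [this]
    exact ((K.image m).orderEmbOfFin hS).strictMono
  · have h3 : (fun i => univ.image (y (e i))) = e := by
      funext i; exact (hy _ (heK i)).2
    simp only [h3]
    symm
    apply eq_of_subset_of_card_le
    · intro f hf
      obtain ⟨i, _, rfl⟩ := mem_image.1 hf
      exact heK i
    · rw [card_image_of_injective, card_univ, Fintype.card_fin, hk]
      intro i j hij
      apply ((K.image m).orderEmbOfFin hS).injective
      rw [← he i, ← he j, hij]

noncomputable def hrank {k : ℕ} (y : Fin k → ℕ) (i : Fin k) : Fin k :=
  ⟨(univ.filter (fun j => y j < y i)).card, by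
    have : (univ.filter (fun j => y j < y i)).card < (univ : Finset (Fin k)).card := by
      apply card_lt_card
      refine ⟨subset_univ _, fun h => ?_⟩
      have := h (mem_univ i)
      simp at this
    simpa using this⟩

lemma hrank_lt {k : ℕ} (y : Fin k → ℕ) (i j : Fin k) : hrank y i < hrank y j ↔ y i < y j := by
  rw [Fin.lt_def]
  simp only [hrank]
  constructor
  · intro h
    by_contra hc
    push Not at hc
    have : (univ.filter (fun l => y l < y j)).card ≤ (univ.filter (fun l => y l < y i)).card := by
      apply card_le_card
      intro l hl
      simp only [mem_filter, mem_univ, true_and] at hl ⊢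
      omega
    omega
  · intro h
    apply card_lt_card
    refine ⟨?_, fun h' => ?_⟩
    · intro l hl
      simp only [mem_filter, mem_univ, true_and] at hl ⊢
      omega
    · have := h' (mem_filter.2 ⟨mem_univ i, h⟩)
      simp at this

lemma clique_cmp {r k : ℕ} (hr : 1 ≤ r) {P Q : Finset (Finset ℕ)} {bl sgP sgQ}
    (hP : PatStruct r P bl sgP) (hQ : PatStruct r Q bl sgQ) (hP0 : sgP 0 = true) (hQ0 : sgQ 0 = true)
    (x : Fin k → Fin r → ℕ) (hx : ∀ i, StrictMono (x i)) (hx0 : StrictMono (fun i => x i ⟨0, hr⟩))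
    (hK : IsClique r {P, Q} (univ.image (fun i => univ.image (x i)))) :
    (∀ i i', i < i' → ∃ sg, (sg = sgP ∨ sg = sgQ) ∧
      ∀ a b : Fin r, x i a < x i' b ↔ HRel bl sg a b) ∧
    (∀ i i', i ≠ i' → ∀ a b, x i a ≠ x i' b) := by
  have hne : ∀ i i', i ≠ i' → univ.image (x i) ≠ univ.image (x i') := by
    intro i i' h h'
    exact h (hx0.injective (by change x i _ = x i' _; rw [image_fin_inj (hx i) (hx i') h']))
  have hmem : ∀ i, univ.image (x i) ∈ univ.image (fun i => univ.image (x i)) :=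
    fun i => mem_image_of_mem _ (mem_univ i)
  obtain ⟨_, h2, h3⟩ := hK
  constructor
  · intro i i' hii
    have hlt : x i ⟨0, hr⟩ < x i' ⟨0, hr⟩ := hx0 hii
    obtain ⟨S, hS, hform⟩ := h3 _ (hmem i) _ (hmem i') (hne i i' hii.ne)
    have : ∃ sg, (sg = sgP ∨ sg = sgQ) ∧ PatStruct r S bl sg ∧ sg 0 = true := by
      rcases hS with rfl | hS
      · exact ⟨sgP, Or.inl rfl, hP, hP0⟩
      · rw [Set.mem_singleton_iff] at hS
        subst hS
        exact ⟨sgQ, Or.inr rfl, hQ, hQ0⟩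
    obtain ⟨sg, hsg, hst, h0⟩ := this
    refine ⟨sg, hsg, ?_⟩
    rcases formsPattern_fwd hst (hx i) (hx i') hform with h | h
    · exact h
    · have := (h ⟨0, hr⟩ ⟨0, hr⟩).2 (Or.inr ⟨rfl, h0⟩)
      omega
  · intro i i' hii a b hab
    have := h2 _ (hmem i) _ (hmem i') (hne i i' hii)
    refine disjoint_left.1 this (mem_image_of_mem _ (mem_univ a)) ?_
    rw [hab]; exact mem_image_of_mem _ (mem_univ b)

lemma card_cliques {r k : ℕ} (hr : 1 ≤ r) {P Q : Finset (Finset ℕ)} {bl sgP sgQ}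
    (hP : PatStruct r P bl sgP) (hQ : PatStruct r Q bl sgQ) (hP0 : sgP 0 = true) (hQ0 : sgQ 0 = true)
    (d : ℕ) (hd : d < r) (hdne : sgP d ≠ sgQ d) (V : Finset ℕ) :
    ((V.powerset.powerset).filter (fun K => IsClique r {P, Q} K ∧ K.card = k)).card ≤
      V.card.choose (r * k) * k ^ k := by
  have hex : ∀ K : Finset (Finset ℕ), ∃ x : Fin k → Fin r → ℕ, IsClique r {P, Q} K ∧ K.card = k →
      (∀ i, StrictMono (x i)) ∧ StrictMono (fun i => x i ⟨0, hr⟩) ∧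
      K = univ.image (fun i => univ.image (x i)) := by
    intro K
    by_cases h : IsClique r {P, Q} K ∧ K.card = k
    · obtain ⟨x, hx⟩ := exists_enum r k hr K h.1.1 h.1.2.1 h.2
      exact ⟨x, fun _ => hx⟩
    · exact ⟨0, fun h' => absurd h' h⟩
  choose x hx using hex
  have htarget : ((V.powersetCard (r * k)) ×ˢ (univ : Finset (Fin k → Fin k))).card =
      V.card.choose (r * k) * k ^ k := by
    rw [card_product, card_powersetCard]; simp
  rw [← htarget]
  apply card_le_card_of_injOn (fun K => (K.biUnion id, hrank (fun i => x K i ⟨d, hd⟩)))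
  · intro K hK
    simp only [coe_filter, Set.mem_ofPred_eq, mem_powerset] at hK
    rw [mem_coe, mem_product, mem_powersetCard]
    refine ⟨⟨?_, ?_⟩, mem_univ _⟩
    · simp only [biUnion_subset]
      intro e he
      exact mem_powerset.1 (hK.1 he)
    · simp only
      rw [card_biUnion_of hK.2.1.1 hK.2.1.2.1, hK.2.2]
  · intro K hK K' hK' heq
    simp only [coe_filter, Set.mem_ofPred_eq, mem_powerset] at hK hK'
    simp only [Prod.mk.injEq] at heq
    obtain ⟨hW, hg⟩ := heq
    obtain ⟨a1, a2, a3⟩ := hx K hK.2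
    obtain ⟨b1, b2, b3⟩ := hx K' hK'.2
    have hc := hK.2.1
    have hc' := hK'.2.1
    rw [a3] at hc
    rw [b3] at hc'
    obtain ⟨c1, c2⟩ := clique_cmp hr hP hQ hP0 hQ0 (x K) a1 a2 hc
    obtain ⟨d1, d2⟩ := clique_cmp hr hP hQ hP0 hQ0 (x K') b1 b2 hc'
    have hdcmp : ∀ i i', x K i ⟨d, hd⟩ < x K i' ⟨d, hd⟩ ↔ x K' i ⟨d, hd⟩ < x K' i' ⟨d, hd⟩ := by
      intro i i'
      have e1 := hrank_lt (fun i => x K i ⟨d, hd⟩) i i'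
      have e2 := hrank_lt (fun i => x K' i ⟨d, hd⟩) i i'
      rw [hg] at e1
      exact e1.symm.trans e2
    have hlt : ∀ i i', i < i' → ∀ a b, x K i a < x K i' b ↔ x K' i a < x K' i' b := by
      intro i i' hii a b
      obtain ⟨sg, hsg, h⟩ := c1 i i' hii
      obtain ⟨sg', hsg', h'⟩ := d1 i i' hii
      have h3 := hdcmp i i'
      rw [h, h'] at h3
      simp only [HRel, lt_irrefl, false_or, true_and] at h3
      have : sg = sg' := by
        rcases hsg with rfl | rfl <;> rcases hsg' with rfl | rfl
        · rfl
        · exact absurd (Bool.eq_iff_iff.2 h3) hdne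
        · exact absurd (Bool.eq_iff_iff.2 h3).symm hdne
        · rfl
      subst this
      rw [h, h']
    have hxeq : (fun s : Fin k × Fin r => x K s.1 s.2) = (fun s : Fin k × Fin r => x K' s.1 s.2) := by
      have hinj : ∀ z : Fin k → Fin r → ℕ, (∀ i, StrictMono (z i)) →
          (∀ i i', i ≠ i' → ∀ a b, z i a ≠ z i' b) →
          Function.Injective (fun s : Fin k × Fin r => z s.1 s.2) := by
        rintro z hz1 hz2 ⟨i, a⟩ ⟨i', b⟩ h
        simp only at h
        by_cases hii : i = i'
        · subst hii
          rw [(hz1 i).injective h]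
        · exact absurd h (hz2 i i' hii a b)
      have himg : ∀ z : Fin k → Fin r → ℕ, univ.image (fun s : Fin k × Fin r => z s.1 s.2) =
          (univ.image (fun i => univ.image (z i))).biUnion id := by
        intro z
        ext w
        simp
      apply eq_of_cmp
      · exact hinj _ a1 c2
      · exact hinj _ b1 d2
      · rw [himg, himg, ← a3, ← b3, hW]
      · rintro ⟨i, a⟩ ⟨i', b⟩
        simp only
        rcases lt_trichotomy i i' with h | h | h
        · exact hlt i i' h a b
        · subst h
          rw [(a1 i).lt_iff_lt, (b1 i).lt_iff_lt]
        · have := hlt i' i h b a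
          have := c2 i i' h.ne' a b
          have := d2 i i' h.ne' a b
          omega
    have : x K = x K' := by
      funext i a
      exact congrFun hxeq (i, a)
    rw [a3, b3, this]

/-- first moment bound -/
lemma first_moment {r k n : ℕ} (hr : 1 ≤ r) {P Q : Finset (Finset ℕ)} {bl sgP sgQ}
    (hP : PatStruct r P bl sgP) (hQ : PatStruct r Q bl sgQ) (hP0 : sgP 0 = true) (hQ0 : sgQ 0 = true)
    (d : ℕ) (hd : d < r) (hdne : sgP d ≠ sgQ d) :
    (((Mat r (Icc 1 (r * n))).filter (fun M => ∃ K ⊆ M, IsClique r {P, Q} K ∧ K.card = k)).card : ℝ) ≤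
      ((k : ℝ) ^ k * (r.factorial : ℝ) ^ k * (n : ℝ) ^ k / ((r * k).factorial : ℝ)) * mcount r n := by
  set V := Icc 1 (r * n) with hV
  have hVc : V.card = r * n := by simp [hV]
  set C := (V.powerset.powerset).filter (fun K => IsClique r {P, Q} K ∧ K.card = k) with hC
  by_cases hkn : k ≤ n
  · have h1 : ((Mat r V).filter (fun M => ∃ K ⊆ M, IsClique r {P, Q} K ∧ K.card = k)).card ≤
        C.card * mcount r (n - k) := by
      have : (Mat r V).filter (fun M => ∃ K ⊆ M, IsClique r {P, Q} K ∧ K.card = k) ⊆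
          C.biUnion (fun K => (Mat r V).filter (fun M => K ⊆ M)) := by
        intro M hM
        rw [mem_filter] at hM
        obtain ⟨hM, K, hKM, hK⟩ := hM
        rw [mem_biUnion]
        refine ⟨K, ?_, mem_filter.2 ⟨hM, hKM⟩⟩
        rw [hC, mem_filter]
        refine ⟨?_, hK⟩
        rw [mem_powerset]
        exact hKM.trans (mem_powerset.1 (mem_filter.1 hM).1)
      refine (card_le_card this).trans (card_biUnion_le_card_mul _ _ _ ?_)
      intro K hK
      rw [hC, mem_filter] at hK
      refine (card_containing r V K).trans (le_of_eq ?_)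
      apply card_Mat r hr
      rw [card_sdiff_of_subset, card_biUnion_of hK.2.1.1 hK.2.1.2.1, hK.2.2, hVc, Nat.mul_sub]
      simp only [biUnion_subset]
      intro e he
      exact mem_powerset.1 (mem_powerset.1 hK.1 he)
    have h2 : C.card ≤ (r * n).choose (r * k) * k ^ k := by
      have := card_cliques (k := k) hr hP hQ hP0 hQ0 d hd hdne V
      rwa [hVc] at this
    have h3 : (((Mat r V).filter (fun M => ∃ K ⊆ M, IsClique r {P, Q} K ∧ K.card = k)).card : ℝ) ≤
        ((r * n).choose (r * k) : ℝ) * (k : ℝ) ^ k * mcount r (n - k) := by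
      exact_mod_cast h1.trans (Nat.mul_le_mul_right _ h2)
    refine h3.trans ?_
    have e1 := mcount_formula r hr n
    have e2 := mcount_formula r hr (n - k)
    have e3 := Nat.choose_mul_factorial_mul_factorial (Nat.mul_le_mul_left r hkn)
    rw [← Nat.mul_sub] at e3
    have e4 : n.factorial ≤ n ^ k * (n - k).factorial := by
      have := Nat.factorial_mul_descFactorial hkn
      rw [← this, mul_comm]
      exact Nat.mul_le_mul_right _ (Nat.descFactorial_le_pow n k)
    have f1 : (mcount r n : ℝ) * ((r.factorial : ℝ) ^ n * n.factorial) = (r * n).factorial := by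
      exact_mod_cast e1
    have f2 : (mcount r (n - k) : ℝ) * ((r.factorial : ℝ) ^ (n - k) * (n - k).factorial) =
        (r * (n - k)).factorial := by exact_mod_cast e2
    have f3 : ((r * n).choose (r * k) : ℝ) * (r * k).factorial * (r * (n - k)).factorial =
        (r * n).factorial := by exact_mod_cast e3
    have f4 : (n.factorial : ℝ) ≤ (n : ℝ) ^ k * (n - k).factorial := by exact_mod_cast e4
    have f5 : (r.factorial : ℝ) ^ n = (r.factorial : ℝ) ^ k * (r.factorial : ℝ) ^ (n - k) := by
      rw [← pow_add]; congr 1; omega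
    have p1 : (0 : ℝ) < r.factorial := by exact_mod_cast Nat.factorial_pos _
    have p2 : (0 : ℝ) < (n - k).factorial := by exact_mod_cast Nat.factorial_pos _
    have p3 : (0 : ℝ) < (r * k).factorial := by exact_mod_cast Nat.factorial_pos _
    have p4 : (0 : ℝ) < mcount r (n - k) := by exact_mod_cast mcount_pos r hr _
    have p5 : (0 : ℝ) < mcount r n := by exact_mod_cast mcount_pos r hr _
    rw [← f2, ← f1, f5] at f3
    have f6 : ((r * n).choose (r * k) : ℝ) * (mcount r (n - k) : ℝ) * (r * k).factorial * (n - k).factorial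
        = mcount r n * (r.factorial : ℝ) ^ k * n.factorial := by
      have : (0 : ℝ) < (r.factorial : ℝ) ^ (n - k) := by positivity
      apply mul_right_cancel₀ this.ne'
      linarith
    have f7 : ((r * n).choose (r * k) : ℝ) * (mcount r (n - k) : ℝ) * (r * k).factorial ≤
        mcount r n * (r.factorial : ℝ) ^ k * (n : ℝ) ^ k := by
      apply le_of_mul_le_mul_right _ p2
      rw [f6]
      calc _ ≤ mcount r n * (r.factorial : ℝ) ^ k * ((n : ℝ) ^ k * (n - k).factorial) := by gcongr
        _ = _ := by ring
    rw [div_mul_eq_mul_div, le_div_iff₀ p3]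
    calc _ = (k : ℝ) ^ k * (((r * n).choose (r * k) : ℝ) * (mcount r (n - k) : ℝ) * (r * k).factorial) := by ring
      _ ≤ (k : ℝ) ^ k * (mcount r n * (r.factorial : ℝ) ^ k * (n : ℝ) ^ k) := by gcongr
      _ = _ := by ring
  · rw [filter_false_of_mem]
    · simp only [card_empty, Nat.cast_zero]; positivity
    · rintro M hM ⟨K, hKM, hK⟩
      rw [mem_Mat] at hM
      have := card_biUnion_of hM.1 hM.2.1
      rw [hM.2.2, hVc] at this
      have := Nat.eq_of_mul_eq_mul_left (by omega) this
      have := card_le_card hKM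
      omega


def hinv (m : ℕ) (sgP : ℕ → Bool) (a l : ℕ) : ℕ := if sgP a = true then l else m - 1 - l

def hlev (m : ℕ) (sgP sgQ : ℕ → Bool) (a j j' : ℕ) : ℕ :=
  hinv m sgP a (if sgP a = sgQ a then j else j')

def hidx (r m : ℕ) (bl : ℕ → ℕ) (a l : ℕ) : ℕ := (bl a * m + l) * r + a

def hcell (r m L : ℕ) (bl : ℕ → ℕ) (a l : ℕ) : Finset ℕ :=
  Ico (1 + hidx r m bl a l * L) (1 + (hidx r m bl a l + 1) * L)

lemma card_hcell (r m L : ℕ) (bl : ℕ → ℕ) (a l : ℕ) : (hcell r m L bl a l).card = L := by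
  simp only [hcell, Nat.card_Ico, add_mul, one_mul]; omega

lemma hinv_lt {m : ℕ} {sgP : ℕ → Bool} {a l : ℕ} (h : l < m) : hinv m sgP a l < m := by
  unfold hinv; split_ifs <;> omega

lemma hinv_hinv {m : ℕ} {sgP : ℕ → Bool} {a l : ℕ} (h : l < m) :
    hinv m sgP a (hinv m sgP a l) = l := by
  unfold hinv; split_ifs <;> omega

lemma hlev_lt {m : ℕ} {sgP sgQ : ℕ → Bool} {a j j' : ℕ} (h : j < m) (h' : j' < m) :
    hlev m sgP sgQ a j j' < m := by
  unfold hlev; apply hinv_lt; split_ifs <;> assumption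

lemma hcell_lt {r m L : ℕ} {bl : ℕ → ℕ} {a l b l' x y : ℕ} (h : hidx r m bl a l < hidx r m bl b l')
    (hx : x ∈ hcell r m L bl a l) (hy : y ∈ hcell r m L bl b l') : x < y := by
  simp only [hcell, mem_Ico] at hx hy
  have : (hidx r m bl a l + 1) * L ≤ hidx r m bl b l' * L := Nat.mul_le_mul_right _ h
  omega

lemma hidx_lt1 {r m : ℕ} {bl : ℕ → ℕ} {a l b l' : ℕ} (h : bl a < bl b) (ha : a < r) (hl : l < m) :
    hidx r m bl a l < hidx r m bl b l' := by
  unfold hidx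
  have h1 : (bl a + 1) * m ≤ bl b * m := Nat.mul_le_mul_right _ h
  have h2 : bl a * m + l + 1 ≤ bl b * m + l' := by rw [add_mul] at h1; omega
  have h3 := Nat.mul_le_mul_right r h2
  rw [add_mul _ 1] at h3
  omega

lemma hidx_lt2 {r m : ℕ} {bl : ℕ → ℕ} {a l b l' : ℕ} (h : bl a = bl b) (ha : a < r) (hl : l < l') :
    hidx r m bl a l < hidx r m bl b l' := by
  unfold hidx
  have h2 : bl a * m + l + 1 ≤ bl b * m + l' := by rw [h]; omega
  have h3 := Nat.mul_le_mul_right r h2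
  rw [add_mul _ 1] at h3
  omega

lemma hidx_lt3 {r m : ℕ} {bl : ℕ → ℕ} {a l b : ℕ} (h : bl a = bl b) (hab : a < b) :
    hidx r m bl a l < hidx r m bl b l := by
  unfold hidx; rw [h]; omega

lemma hidx_inj {r m : ℕ} {bl : ℕ → ℕ} {a l b l' : ℕ} (ha : a < r) (hb : b < r) (hl : l < m)
    (hl' : l' < m) (h : hidx r m bl a l = hidx r m bl b l') : a = b ∧ l = l' := by
  have hab : bl a = bl b := by
    rcases lt_trichotomy (bl a) (bl b) with h1 | h1 | h1
    · have := hidx_lt1 (l' := l') h1 ha hl; omega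
    · exact h1
    · have := hidx_lt1 (l' := l) h1 hb hl'; omega
  have hll : l = l' := by
    rcases lt_trichotomy l l' with h1 | h1 | h1
    · have := hidx_lt2 (m := m) hab ha h1; omega
    · exact h1
    · have := hidx_lt2 (m := m) hab.symm hb h1; omega
  subst hll
  refine ⟨?_, rfl⟩
  unfold hidx at h
  rw [hab] at h
  omega

lemma hcell_disj {r m L : ℕ} {bl : ℕ → ℕ} {a l b l' x : ℕ} (ha : a < r) (hb : b < r) (hl : l < m)
    (hl' : l' < m) (hx : x ∈ hcell r m L bl a l) (hx' : x ∈ hcell r m L bl b l') :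
    a = b ∧ l = l' := by
  rcases lt_trichotomy (hidx r m bl a l) (hidx r m bl b l') with h | h | h
  · have := hcell_lt h hx hx'; omega
  · exact hidx_inj ha hb hl hl' h
  · have := hcell_lt h hx' hx; omega

/-- `x` picks vertices from cells of type `(j, j')` -/
def HPick (r m L : ℕ) (bl : ℕ → ℕ) (sgP sgQ : ℕ → Bool) (j j' : ℕ) (x : Fin r → ℕ) : Prop :=
  ∀ a : Fin r, x a ∈ hcell r m L bl a (hlev m sgP sgQ a j j')

def HType (r m L : ℕ) (bl : ℕ → ℕ) (sgP sgQ : ℕ → Bool) (e : Finset ℕ) (j j' : ℕ) : Prop :=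
  j < m ∧ j' < m ∧ ∃ x : Fin r → ℕ, e = univ.image x ∧ HPick r m L bl sgP sgQ j j' x

section
variable {r m L : ℕ} {bl : ℕ → ℕ} {sgP sgQ : ℕ → Bool}

lemma hlev_congr {a b j j' : ℕ} (h1 : sgP a = sgP b) (h2 : sgQ a = sgQ b) :
    hlev m sgP sgQ a j j' = hlev m sgP sgQ b j j' := by
  unfold hlev hinv; rw [h1, h2]

lemma HPick.strictMono (hbl : ∀ a b, a ≤ b → bl a ≤ bl b)
    (hcP : ∀ a b, bl a = bl b → sgP a = sgP b) (hcQ : ∀ a b, bl a = bl b → sgQ a = sgQ b)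
    {j j' : ℕ} (hj : j < m) (hj' : j' < m) {x : Fin r → ℕ} (hx : HPick r m L bl sgP sgQ j j' x) :
    StrictMono x := by
  intro a b hab
  have hab' : (a : ℕ) < b := hab
  refine hcell_lt ?_ (hx a) (hx b)
  rcases (hbl a b hab'.le).lt_or_eq with h | h
  · exact hidx_lt1 h a.2 (hlev_lt hj hj')
  · rw [← hlev_congr (hcP _ _ h) (hcQ _ _ h)]
    exact hidx_lt3 h hab'

lemma pair_lt {P Q : Finset (Finset ℕ)} (hP : PatStruct r P bl sgP) (hQ : PatStruct r Q bl sgQ)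
    (hbl : ∀ a b, a ≤ b → bl a ≤ bl b)
    (hcP : ∀ a b, bl a = bl b → sgP a = sgP b) (hcQ : ∀ a b, bl a = bl b → sgQ a = sgQ b)
    {e f : Finset ℕ} {j j' i i' : ℕ} (he : HType r m L bl sgP sgQ e j j')
    (hf : HType r m L bl sgP sgQ f i i') (hji : j < i) (hji' : j' ≠ i') :
    Disjoint e f ∧ ∃ S ∈ ({P, Q} : Set (Finset (Finset ℕ))), FormsPattern r e f S := by
  obtain ⟨hj, hj', x, rfl, hx⟩ := he
  obtain ⟨hi, hi', y, rfl, hy⟩ := hf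
  have hxm := hx.strictMono hbl hcP hcQ hj hj'
  have hym := hy.strictMono hbl hcP hcQ hi hi'
  obtain ⟨S, sg, hS, hst, hsg⟩ : ∃ S sg, S ∈ ({P, Q} : Set (Finset (Finset ℕ))) ∧
      PatStruct r S bl sg ∧ ∀ a, (sg a = true → hlev m sgP sgQ a j j' < hlev m sgP sgQ a i i') ∧
        (sg a = false → hlev m sgP sgQ a i i' < hlev m sgP sgQ a j j') := by
    rcases lt_or_gt_of_ne hji' with h | h
    · refine ⟨P, sgP, by simp, hP, fun a => ?_⟩
      unfold hlev hinv
      constructor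
      · intro h1; simp only [h1, if_true]; split_ifs <;> omega
      · intro h1; simp only [h1, Bool.false_eq_true, if_false]; split_ifs <;> omega
    · refine ⟨Q, sgQ, by simp, hQ, fun a => ?_⟩
      unfold hlev hinv
      constructor
      · intro h1
        cases h2 : sgP a <;> simp [h1] <;> omega
      · intro h1
        cases h2 : sgP a <;> simp [h1] <;> omega
  have key : ∀ a b : Fin r, (HRel bl sg a b → x a < y b) ∧ (¬ HRel bl sg a b → y b < x a) := by
    intro a b
    rcases lt_trichotomy (bl a) (bl b) with h | h | h
    · have := hcell_lt (hidx_lt1 h a.2 (hlev_lt hj hj')) (hx a) (hy b)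
      exact ⟨fun _ => this, fun h' => absurd (Or.inl h) h'⟩
    · have hyb := hy b
      rw [← hlev_congr (hcP _ _ h) (hcQ _ _ h)] at hyb
      constructor
      · rintro (h' | h')
        · omega
        · exact hcell_lt (hidx_lt2 h a.2 ((hsg a).1 h'.2)) (hx a) hyb
      · intro h'
        have : sg a = false := by
          by_contra hc
          exact h' (Or.inr ⟨h, by simpa using hc⟩)
        exact hcell_lt (hidx_lt2 h.symm b.2 ((hsg a).2 this)) hyb (hx a)
    · have := hcell_lt (hidx_lt1 h b.2 (hlev_lt hi hi')) (hy b) (hx a)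
      refine ⟨?_, fun _ => this⟩
      rintro (h' | h') <;> omega
  have hne : ∀ a b, x a ≠ y b := by
    intro a b
    by_cases h : HRel bl sg a b
    · exact ((key a b).1 h).ne
    · exact ((key a b).2 h).ne'
  refine ⟨?_, S, hS, formsPattern_bwd hst hxm hym hne ?_⟩
  · rw [disjoint_left]
    intro z hz hz'
    obtain ⟨a, _, rfl⟩ := mem_image.1 hz
    obtain ⟨b, _, hb⟩ := mem_image.1 hz'
    exact hne a b hb.symm
  · intro a b
    refine ⟨fun h => ?_, (key a b).1⟩
    by_contra hc
    have := (key a b).2 hc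
    omega

def HCl (r m L : ℕ) (bl : ℕ → ℕ) (sgP sgQ : ℕ → Bool) (K : Finset (Finset ℕ)) : Prop :=
  ∃ τ : Finset ℕ → ℕ × ℕ, (∀ e ∈ K, HType r m L bl sgP sgQ e (τ e).1 (τ e).2) ∧
    ∀ e ∈ K, ∀ f ∈ K, e ≠ f → (τ e).1 ≠ (τ f).1 ∧ (τ e).2 ≠ (τ f).2

lemma HCl.isClique {P Q : Finset (Finset ℕ)} (hP : PatStruct r P bl sgP)
    (hQ : PatStruct r Q bl sgQ) (hbl : ∀ a b, a ≤ b → bl a ≤ bl b)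
    (hcP : ∀ a b, bl a = bl b → sgP a = sgP b) (hcQ : ∀ a b, bl a = bl b → sgQ a = sgQ b)
    {K : Finset (Finset ℕ)} (hK : HCl r m L bl sgP sgQ K) : IsClique r {P, Q} K := by
  obtain ⟨τ, h1, h2⟩ := hK
  have key : ∀ e ∈ K, ∀ f ∈ K, e ≠ f → Disjoint e f ∧
      ∃ S ∈ ({P, Q} : Set (Finset (Finset ℕ))), FormsPattern r e f S := by
    intro e he f hf hef
    obtain ⟨h3, h4⟩ := h2 e he f hf hef
    rcases lt_or_gt_of_ne h3 with h | h
    · exact pair_lt hP hQ hbl hcP hcQ (h1 e he) (h1 f hf) h h4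
    · obtain ⟨a, S, hS, b⟩ := pair_lt hP hQ hbl hcP hcQ (h1 f hf) (h1 e he) h h4.symm
      exact ⟨a.symm, S, hS, formsPattern_symm b⟩
  refine ⟨?_, fun e he f hf hef => (key e he f hf hef).1, fun e he f hf hef => (key e he f hf hef).2⟩
  intro e he
  obtain ⟨hj, hj', x, hex, hx⟩ := h1 e he
  rw [hex, card_image_of_injective _ (hx.strictMono hbl hcP hcQ hj hj').injective]
  simp

lemma avail {n k T : ℕ} (hr : 2 ≤ r) (hbl : ∀ a b, a ≤ b → bl a ≤ bl b) (hble : ∀ a, bl a ≤ a)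
    (hcP : ∀ a b, bl a = bl b → sgP a = sgP b) (hcQ : ∀ a b, bl a = bl b → sgQ a = sgQ b)
    (hP0 : sgP 0 = true) (hQ0 : sgQ 0 = true)
    (d : ℕ) (hd : d < r) (hdne : sgP d ≠ sgQ d)
    (hm : 1 ≤ m) (hL : 1 ≤ L) (hmL : r * m * L ≤ n) (hk : 4 * k ≤ m) (hT : 8 * r * T ≤ m * L)
    (U : Finset ℕ) (K : Finset (Finset ℕ)) (hUV : U ⊆ Icc 1 (r * n))
    (hV : (Icc 1 (r * n)).card ≤ U.card + r * T) (hdis : ∀ e ∈ K, Disjoint e U)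
    (hCl : HCl r m L bl sgP sgQ K) (hKk : K.card < k) :
    ∃ v ∈ U, ((m : ℝ) / 2 * ((L : ℝ) / 2) ^ (r - 1)) ≤
      (((U.powersetCard r).filter (fun e => v ∈ e)).filter
        (fun e => HCl r m L bl sgP sgQ (insert e K))).card := by
  -- bad cells
  let Bad : Finset (ℕ × ℕ) := (range r ×ˢ range m).filter
    (fun s => 2 * (hcell r m L bl s.1 s.2 ∩ U).card < L)
  have hcellV : ∀ a l, a < r → l < m → hcell r m L bl a l ⊆ Icc 1 (r * n) := by
    intro a l ha hl z hz
    simp only [hcell, mem_Ico, mem_Icc] at hz ⊢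
    have h1 : hidx r m bl a l + 1 ≤ r * m * r := by
      have h2 : bl a * m + l + 1 ≤ r * m := by
        have : (bl a + 1) * m ≤ r * m := Nat.mul_le_mul_right _ (by have := hble a; omega)
        rw [add_mul] at this; omega
      have h3 := Nat.mul_le_mul_right r h2
      unfold hidx
      rw [add_mul _ 1] at h3
      omega
    have h2 := Nat.mul_le_mul_right L h1
    have h3 : r * m * r * L ≤ r * n := by
      calc r * m * r * L = r * (r * m * L) := by ring
        _ ≤ _ := Nat.mul_le_mul_left _ hmL
    omega
  have hBad : 4 * Bad.card ≤ m := by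
    have h1 : ∑ s ∈ Bad, (hcell r m L bl s.1 s.2 \ U).card ≤ r * T := by
      rw [← card_biUnion]
      · have : Bad.biUnion (fun s => hcell r m L bl s.1 s.2 \ U) ⊆ Icc 1 (r * n) \ U := by
          rw [biUnion_subset]
          intro s hs
          simp only [Bad, mem_filter, mem_product, mem_range] at hs
          exact sdiff_subset_sdiff (hcellV _ _ hs.1.1 hs.1.2) (Subset.refl _)
        refine (card_le_card this).trans ?_
        rw [card_sdiff_of_subset hUV]
        omega
      · intro s hs s' hs' hne
        simp only [Bad, mem_coe, mem_filter, mem_product, mem_range] at hs hs'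
        change Disjoint (hcell r m L bl s.1 s.2 \ U) (hcell r m L bl s'.1 s'.2 \ U)
        rw [disjoint_left]
        intro z hz hz'
        have := hcell_disj hs.1.1 hs'.1.1 hs.1.2 hs'.1.2 (mem_sdiff.1 hz).1 (mem_sdiff.1 hz').1
        exact hne (Prod.ext this.1 this.2)
    have h2 : Bad.card * L ≤ 2 * ∑ s ∈ Bad, (hcell r m L bl s.1 s.2 \ U).card := by
      rw [mul_sum, ← smul_eq_mul, ← sum_const]
      apply sum_le_sum
      intro s hs
      simp only [Bad, mem_filter] at hs
      have := card_sdiff_add_card_inter (hcell r m L bl s.1 s.2) U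
      rw [card_hcell] at this
      omega
    have h3 : 4 * Bad.card * L ≤ m * L := by
      calc 4 * Bad.card * L = 4 * (Bad.card * L) := by ring
        _ ≤ 4 * (2 * (r * T)) := Nat.mul_le_mul_left _ (h2.trans (Nat.mul_le_mul_left _ h1))
        _ = 8 * r * T := by ring
        _ ≤ _ := hT
    exact Nat.le_of_mul_le_mul_right h3 hL
  let X : Finset ℕ := Bad.image (fun s => hinv m sgP s.1 s.2)
  have hX : 4 * X.card ≤ m := by
    have : X.card ≤ Bad.card := card_image_le
    omega
  let G : Finset ℕ := range m \ X
  have hG : ∀ c ∈ G, c < m ∧ ∀ a < r, L ≤ 2 * (hcell r m L bl a (hinv m sgP a c) ∩ U).card := by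
    intro c hc
    simp only [G, mem_sdiff, mem_range] at hc
    refine ⟨hc.1, fun a ha => ?_⟩
    by_contra hcon
    push Not at hcon
    apply hc.2
    refine mem_image.2 ⟨(a, hinv m sgP a c), ?_, hinv_hinv hc.1⟩
    simp only [Bad, mem_filter, mem_product, mem_range]
    exact ⟨⟨ha, hinv_lt hc.1⟩, hcon⟩
  have hGcard : ∀ J : Finset ℕ, J.card ≤ K.card → m ≤ 2 * (G \ J).card := by
    intro J hJ
    have h1 := le_card_sdiff J G
    have h2 := le_card_sdiff X (range m)
    rw [card_range] at h2
    change m - X.card ≤ G.card at h2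
    omega
  obtain ⟨τ, hτ1, hτ2⟩ := hCl
  let J := K.image (fun e => (τ e).1)
  let J' := K.image (fun e => (τ e).2)
  have hJ := hGcard J card_image_le
  have hJ' := hGcard J' card_image_le
  have : 0 < (G \ J).card := by omega
  obtain ⟨j, hj⟩ := card_pos.1 this
  rw [mem_sdiff] at hj
  obtain ⟨hjm, hjav⟩ := hG j hj.1
  have h0r : 0 < r := by omega
  have h0 : 0 < (hcell r m L bl 0 (hinv m sgP 0 j) ∩ U).card := by
    have := hjav 0 h0r; omega
  obtain ⟨v, hv⟩ := card_pos.1 h0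
  rw [mem_inter] at hv
  refine ⟨v, hv.2, ?_⟩
  let z0 : Fin r := ⟨0, h0r⟩
  let C : ℕ → Fin r → Finset ℕ := fun j' a =>
    if a = z0 then {v} else hcell r m L bl a (hlev m sgP sgQ a j j') ∩ U
  have hlev0 : ∀ j', hlev m sgP sgQ 0 j j' = hinv m sgP 0 j := by
    intro j'; unfold hlev; rw [hP0, hQ0]; simp
  have hpick : ∀ j', ∀ x ∈ Fintype.piFinset (C j'), HPick r m L bl sgP sgQ j j' x ∧
      (∀ a, x a ∈ U) ∧ x z0 = v := by
    intro j' x hx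
    rw [Fintype.mem_piFinset] at hx
    have hxz : x z0 = v := by have := hx z0; simpa [C] using this
    refine ⟨fun a => ?_, fun a => ?_, hxz⟩
    · by_cases ha : a = z0
      · subst ha
        rw [hxz]
        change v ∈ hcell r m L bl 0 (hlev m sgP sgQ 0 j j')
        rw [hlev0]; exact hv.1
      · have := hx a
        simp only [C, if_neg ha, mem_inter] at this
        exact this.1
    · by_cases ha : a = z0
      · subst ha
        rw [hxz]; exact hv.2
      · have := hx a
        simp only [C, if_neg ha, mem_inter] at this
        exact this.2
  have hcount : ((G \ J').sigma (fun j' => Fintype.piFinset (C j'))).card ≤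
      (((U.powersetCard r).filter (fun e => v ∈ e)).filter
        (fun e => HCl r m L bl sgP sgQ (insert e K))).card := by
    apply card_le_card_of_injOn (fun s => univ.image s.2)
    · rintro ⟨j', x⟩ hs
      rw [mem_coe, mem_sigma] at hs
      obtain ⟨hj', hx⟩ := hs
      simp only at hj' hx
      rw [mem_sdiff] at hj'
      obtain ⟨hpk, hxU, hxz⟩ := hpick j' x hx
      have hj'm := (hG j' hj'.1).1
      have hsm := hpk.strictMono hbl hcP hcQ hjm hj'm
      have hve : v ∈ univ.image x := by rw [← hxz]; exact mem_image_of_mem _ (mem_univ _)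
      rw [mem_coe, mem_filter, mem_filter, mem_powersetCard]
      refine ⟨⟨⟨?_, ?_⟩, hve⟩, ?_⟩
      · intro y hy
        obtain ⟨a, _, rfl⟩ := mem_image.1 hy
        exact hxU a
      · simp only
        rw [card_image_of_injective _ hsm.injective]; simp
      · have heK : univ.image x ∉ K := fun h => disjoint_left.1 (hdis _ h) hve hv.2
        have hnee : ∀ f ∈ K, f ≠ univ.image x := by rintro f hf rfl; exact heK hf
        have hj1 : ∀ f ∈ K, (τ f).1 ≠ j := fun f hf h =>
          hj.2 (mem_image.2 ⟨f, hf, h⟩)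
        have hj2 : ∀ f ∈ K, (τ f).2 ≠ j' := fun f hf h =>
          hj'.2 (mem_image.2 ⟨f, hf, h⟩)
        refine ⟨Function.update τ (univ.image x) (j, j'), ?_, ?_⟩
        · intro f hf
          rcases mem_insert.1 hf with rfl | hf'
          · rw [Function.update_self]
            exact ⟨hjm, hj'm, x, rfl, hpk⟩
          · rw [Function.update_of_ne (hnee f hf')]
            exact hτ1 f hf'
        · intro f hf g hg hfg
          rcases mem_insert.1 hf with rfl | hf' <;> rcases mem_insert.1 hg with rfl | hg'
          · exact absurd rfl hfg
          · rw [Function.update_self, Function.update_of_ne (hnee g hg')]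
            exact ⟨(hj1 g hg').symm, (hj2 g hg').symm⟩
          · rw [Function.update_self, Function.update_of_ne (hnee f hf')]
            exact ⟨hj1 f hf', hj2 f hf'⟩
          · rw [Function.update_of_ne (hnee f hf'), Function.update_of_ne (hnee g hg')]
            exact hτ2 f hf' g hg' hfg
    · rintro ⟨j', x⟩ hs ⟨i', y⟩ hs' heq
      rw [mem_coe, mem_sigma] at hs hs'
      obtain ⟨hj', hx⟩ := hs
      obtain ⟨hi', hy⟩ := hs'
      simp only at hj' hx hi' hy heq
      rw [mem_sdiff] at hj' hi'
      have hpk := (hpick j' x hx).1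
      have hpk' := (hpick i' y hy).1
      have hj'm := (hG j' hj'.1).1
      have hi'm := (hG i' hi'.1).1
      have hxy := image_fin_inj (hpk.strictMono hbl hcP hcQ hjm hj'm)
        (hpk'.strictMono hbl hcP hcQ hjm hi'm) heq
      subst hxy
      have := (hcell_disj hd hd (hlev_lt hjm hj'm) (hlev_lt hjm hi'm) (hpk ⟨d, hd⟩) (hpk' ⟨d, hd⟩)).2
      unfold hlev at this
      simp only [if_neg hdne] at this
      have h5 := congrArg (hinv m sgP d) this
      rw [hinv_hinv hj'm, hinv_hinv hi'm] at h5
      subst h5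
      rfl
  have hprod : ∀ j' ∈ G \ J', ((L : ℝ) / 2) ^ (r - 1) ≤ ((Fintype.piFinset (C j')).card : ℝ) := by
    intro j' hj'
    rw [mem_sdiff] at hj'
    rw [Fintype.card_piFinset]
    push_cast
    have e1 : ((L : ℝ) / 2) ^ (r - 1) = ∏ a : Fin r, (if a = z0 then (1 : ℝ) else (L : ℝ) / 2) := by
      rw [prod_ite, prod_const_one, one_mul, prod_const, filter_ne' , card_erase_of_mem (mem_univ _)]
      simp
    rw [e1]
    apply prod_le_prod
    · intro a _; split_ifs <;> positivity
    · intro a _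
      by_cases ha : a = z0
      · simp [C, ha]
      · simp only [C, if_neg ha]
        have : L ≤ 2 * (hcell r m L bl a (hlev m sgP sgQ a j j') ∩ U).card := by
          unfold hlev
          split_ifs
          · exact hjav a a.2
          · exact (hG j' hj'.1).2 a a.2
        have h6 : (L : ℝ) ≤ 2 * ((hcell r m L bl a (hlev m sgP sgQ a j j') ∩ U).card : ℝ) := by
          exact_mod_cast this
        linarith
  have h7 : ((G \ J').card : ℝ) * ((L : ℝ) / 2) ^ (r - 1) ≤
      (((G \ J').sigma (fun j' => Fintype.piFinset (C j'))).card : ℝ) := by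
    rw [card_sigma]
    push_cast
    rw [← nsmul_eq_mul]
    exact card_nsmul_le_sum _ _ _ hprod
  have h8 : (m : ℝ) / 2 ≤ ((G \ J').card : ℝ) := by
    have : (m : ℝ) ≤ 2 * ((G \ J').card : ℝ) := by exact_mod_cast hJ'
    linarith
  calc (m : ℝ) / 2 * ((L : ℝ) / 2) ^ (r - 1) ≤ ((G \ J').card : ℝ) * ((L : ℝ) / 2) ^ (r - 1) := by
        gcongr
    _ ≤ _ := h7
    _ ≤ _ := by exact_mod_cast hcount

lemma lower_tail {P Q : Finset (Finset ℕ)} {n k T : ℕ} (hr : 2 ≤ r)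
    (hP : PatStruct r P bl sgP) (hQ : PatStruct r Q bl sgQ)
    (hbl : ∀ a b, a ≤ b → bl a ≤ bl b) (hble : ∀ a, bl a ≤ a)
    (hcP : ∀ a b, bl a = bl b → sgP a = sgP b) (hcQ : ∀ a b, bl a = bl b → sgQ a = sgQ b)
    (hP0 : sgP 0 = true) (hQ0 : sgQ 0 = true)
    (d : ℕ) (hd : d < r) (hdne : sgP d ≠ sgQ d)
    (hm : 1 ≤ m) (hL : 1 ≤ L) (hmL : r * m * L ≤ n) (hk : 4 * k ≤ m) (hT : 8 * r * T ≤ m * L)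
    (p : ℝ) (hp0 : 0 ≤ p) (hp1 : p ≤ 1)
    (hp : p * ((r : ℝ) * n) ^ (r - 1) ≤ (m : ℝ) / 2 * ((L : ℝ) / 2) ^ (r - 1)) :
    (((Mat r (Icc 1 (r * n))).filter
      (fun M => ∀ K ⊆ M, IsClique r {P, Q} K → K.card < k)).card : ℝ) ≤
      2 ^ k * (1 - p / 2) ^ T * mcount r n := by
  have h := greedy r (by omega) (Icc 1 (r * n)) k T p hp0 hp1 (HCl r m L bl sgP sgQ) ?_ T
    (Icc 1 (r * n)) ∅ n le_rfl (Subset.refl _) (by simp) (by simp) (by simp)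
    ⟨fun _ => (0, 0), by simp, by simp⟩
  · simp only [card_empty, pow_zero, div_one] at h
    refine le_trans ?_ h
    norm_cast
    apply card_le_card
    intro M hM
    rw [mem_filter] at hM ⊢
    refine ⟨hM.1, ?_⟩
    rintro ⟨N, hN, h1, h2⟩
    rw [empty_union] at h1 h2
    have := hM.2 N hN (h1.isClique hP hQ hbl hcP hcQ)
    omega
  · intro U K hUV hV hdis hCl hKk
    obtain ⟨v, hv, h1⟩ := avail hr hbl hble hcP hcQ hP0 hQ0 d hd hdne hm hL hmL hk hT U K hUV hV
      hdis hCl hKk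
    refine ⟨v, hv, le_trans ?_ h1⟩
    refine le_trans ?_ hp
    apply mul_le_mul_of_nonneg_left _ hp0
    have hU : U.card ≤ r * n := by simpa using card_le_card hUV
    have : (U.card - 1).choose (r - 1) ≤ (r * n) ^ (r - 1) :=
      (Nat.choose_le_pow _ _).trans (Nat.pow_le_pow_left (by omega) _)
    exact_mod_cast this

end


lemma zClique_bdd (r : ℕ) (Ps : Set (Finset (Finset ℕ))) (M : Finset (Finset ℕ)) :
    BddAbove {k | ∃ K : Finset (Finset ℕ), K ⊆ M ∧ IsClique r Ps K ∧ K.card = k} :=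
  ⟨M.card, by rintro k ⟨K, h, _, rfl⟩; exact card_le_card h⟩

lemma le_zClique {r : ℕ} {Ps : Set (Finset (Finset ℕ))} {M K : Finset (Finset ℕ)} (h : K ⊆ M)
    (hK : IsClique r Ps K) : K.card ≤ zClique r Ps M :=
  le_csSup (zClique_bdd r Ps M) ⟨K, h, hK, rfl⟩

lemma exists_of_le_zClique {r k : ℕ} {Ps : Set (Finset (Finset ℕ))} {M : Finset (Finset ℕ)}
    (h : k ≤ zClique r Ps M) : ∃ K ⊆ M, IsClique r Ps K ∧ K.card = k := by
  have hne : {k | ∃ K : Finset (Finset ℕ), K ⊆ M ∧ IsClique r Ps K ∧ K.card = k}.Nonempty :=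
    ⟨0, ∅, by simp, ⟨by simp, by simp, by simp⟩, by simp⟩
  obtain ⟨K, hKM, hK, hc⟩ := Nat.sSup_mem hne (zClique_bdd r Ps M)
  change K.card = zClique r Ps M at hc
  obtain ⟨K', hK', hc'⟩ := exists_subset_card_eq (h.trans hc.ge)
  refine ⟨K', hK'.trans hKM, ⟨fun e he => hK.1 e (hK' he), fun e he f hf => hK.2.1 e (hK' he) f (hK' hf),
    fun e he f hf => hK.2.2 e (hK' he) f (hK' hf)⟩, hc'⟩

lemma card_matchingFamilies (r n : ℕ) (hr : 1 ≤ r) : (matchingFamilies r n).card = mcount r n := by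
  rw [matchingFamilies_eq r n hr]
  exact card_Mat r hr n _ (by simp)

lemma prob_le (r n : ℕ) (hr : 1 ≤ r) (A B : Finset (Finset ℕ) → Prop) [DecidablePred B] (q : ℝ)
    (hAB : ∀ M, A M → B M)
    (h : (((Mat r (Icc 1 (r * n))).filter B).card : ℝ) ≤ q * mcount r n) : prob r n A ≤ q := by
  unfold prob
  rw [card_matchingFamilies r n hr, div_le_iff₀ (by exact_mod_cast mcount_pos r hr n)]
  refine le_trans ?_ h
  rw [matchingFamilies_eq r n hr]
  norm_cast
  apply card_le_card
  intro M hM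
  rw [mem_filter] at hM ⊢
  exact ⟨hM.1, hAB M hM.2⟩

lemma prob_nonneg (r n : ℕ) (A : Finset (Finset ℕ) → Prop) : 0 ≤ prob r n A := by
  unfold prob; positivity

lemma prob_le_one (r n : ℕ) (A : Finset (Finset ℕ) → Prop) : prob r n A ≤ 1 := by
  unfold prob
  apply div_le_one_of_le₀ _ (by positivity)
  exact_mod_cast card_filter_le _ _

lemma prob_and (r n : ℕ) (hr : 1 ≤ r) (A B : Finset (Finset ℕ) → Prop) :
    1 - prob r n (fun M => ¬ A M) - prob r n (fun M => ¬ B M) ≤ prob r n (fun M => A M ∧ B M) := by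
  have hpos : (0 : ℝ) < (matchingFamilies r n).card := by
    rw [card_matchingFamilies r n hr]; exact_mod_cast mcount_pos r hr n
  unfold prob
  rw [sub_sub, ← add_div, sub_le_iff_le_add, ← add_div, le_div_iff₀ hpos, one_mul]
  norm_cast
  refine le_trans ?_ ((card_union_le _ _).trans (Nat.add_le_add_left (card_union_le _ _) _))
  apply card_le_card
  intro M hM
  simp only [mem_union, mem_filter, hM, true_and]
  tauto

noncomputable def hx (r n : ℕ) : ℝ := (n : ℝ) ^ ((1 : ℝ) / ((r : ℝ) - 1))

lemma hx_nonneg (r n : ℕ) : 0 ≤ hx r n := Real.rpow_nonneg (by positivity) _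

lemma hx_pow (r n : ℕ) (hr : 2 ≤ r) : hx r n ^ (r - 1) = n := by
  have h1 : ((r - 1 : ℕ) : ℝ) = (r : ℝ) - 1 := by
    rw [Nat.cast_sub (by omega)]; simp
  have h2 : (0 : ℝ) < (r : ℝ) - 1 := by
    have : (2 : ℝ) ≤ r := by exact_mod_cast hr
    linarith
  unfold hx
  rw [← Real.rpow_natCast, ← Real.rpow_mul (by positivity), h1, one_div, inv_mul_cancel₀ h2.ne',
    Real.rpow_one]

lemma hx_le (r n : ℕ) (hr : 2 ≤ r) (hn : 1 ≤ n) : hx r n ≤ n := by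
  have h2 : (1 : ℝ) ≤ (r : ℝ) - 1 := by
    have : (2 : ℝ) ≤ r := by exact_mod_cast hr
    linarith
  unfold hx
  have := Real.rpow_le_rpow_of_exponent_le (x := (n : ℝ)) (by exact_mod_cast hn)
    (show (1 : ℝ) / ((r : ℝ) - 1) ≤ 1 by rw [div_le_one (by linarith)]; exact h2)
  rwa [Real.rpow_one] at this

lemma hx_tendsto (r : ℕ) (hr : 2 ≤ r) : Filter.Tendsto (hx r) Filter.atTop Filter.atTop := by
  have h2 : (0 : ℝ) < (r : ℝ) - 1 := by
    have : (2 : ℝ) ≤ r := by exact_mod_cast hr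
    linarith
  exact (tendsto_rpow_atTop (by positivity)).comp tendsto_natCast_atTop_atTop

lemma upper_calc (r n k : ℕ) (hr : 2 ≤ r) (hk : 2 * (r.factorial : ℝ) * Real.exp r * hx r n ≤ k) :
    ((k : ℝ) ^ k * (r.factorial : ℝ) ^ k * (n : ℝ) ^ k / ((r * k).factorial : ℝ)) ≤ (1 / 2 : ℝ) ^ k := by
  have p3 : (0 : ℝ) < (r * k).factorial := by exact_mod_cast Nat.factorial_pos _
  have pf : (1 : ℝ) ≤ r.factorial := by exact_mod_cast Nat.factorial_pos _
  have pe : (1 : ℝ) ≤ Real.exp r := Real.one_le_exp (by positivity)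
  have h1 : (2 * (r.factorial : ℝ) * Real.exp r) * n ≤ (k : ℝ) ^ (r - 1) := by
    set c := 2 * (r.factorial : ℝ) * Real.exp r with hc
    have hc1 : 1 ≤ c := by nlinarith
    have h3 : (c * hx r n) ^ (r - 1) ≤ (k : ℝ) ^ (r - 1) :=
      pow_le_pow_left₀ (by have := hx_nonneg r n; positivity) hk _
    rw [mul_pow, hx_pow r n hr] at h3
    refine le_trans ?_ h3
    gcongr
    exact le_self_pow₀ hc1 (by omega)
  have h2 := Real.pow_div_factorial_le_exp ((r * k : ℕ) : ℝ) (by positivity) (r * k)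
  rw [div_le_iff₀ p3] at h2
  have h3 : (k : ℝ) ^ (r * k) ≤ ((r * k : ℕ) : ℝ) ^ (r * k) := by
    gcongr
    exact Nat.le_mul_of_pos_left _ (by omega)
  have h4 : (k : ℝ) ^ (r * k) = (k : ℝ) ^ k * ((k : ℝ) ^ (r - 1)) ^ k := by
    rw [← pow_mul, ← pow_add]
    congr 1
    obtain ⟨s, rfl⟩ : ∃ s, r = s + 1 := ⟨r - 1, by omega⟩
    rw [Nat.add_sub_cancel]; ring
  have h5 : ((2 * (r.factorial : ℝ) * Real.exp r) * n) ^ k ≤ ((k : ℝ) ^ (r - 1)) ^ k :=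
    pow_le_pow_left₀ (by positivity) h1 _
  have h6 : Real.exp ((r * k : ℕ) : ℝ) = Real.exp r ^ k := by
    rw [← Real.exp_nat_mul]; congr 1; push_cast; ring
  rw [h6] at h2
  have h7 : Real.exp r ^ k * ((k : ℝ) ^ k * (r.factorial : ℝ) ^ k * (n : ℝ) ^ k * 2 ^ k) ≤
      Real.exp r ^ k * (r * k).factorial := by
    calc _ = (k : ℝ) ^ k * ((2 * (r.factorial : ℝ) * Real.exp r) * n) ^ k := by
          rw [mul_pow, mul_pow, mul_pow]; ring
      _ ≤ (k : ℝ) ^ k * ((k : ℝ) ^ (r - 1)) ^ k := by gcongr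
      _ = _ := h4.symm
      _ ≤ _ := h3
      _ ≤ _ := h2
  have h8 := le_of_mul_le_mul_left h7 (by positivity)
  rw [div_le_iff₀ p3, one_div, inv_pow, ← div_eq_inv_mul, le_div_iff₀ (by positivity)]
  exact h8

lemma lower_calc (r n m L T k : ℕ) (hr : 2 ≤ r) (hm : 1 ≤ m) (hmx : (m : ℝ) ≤ hx r n / r)
    (hL : L = n / (r * m)) (hT : T = m * L / (8 * r)) (hn : 16 * r ^ 2 ≤ n)
    (c : ℝ) (hc : c = 1 / (64 * (r : ℝ) ^ 2 * (4 * (r : ℝ) ^ 2) ^ (r - 1)))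
    (hk : k = ⌊c / 4 * m⌋₊) (p : ℝ) (hp : p = m / (2 * (4 * (r : ℝ) ^ 2) ^ (r - 1) * n)) :
    1 ≤ L ∧ r * m * L ≤ n ∧ 4 * k ≤ m ∧ 8 * r * T ≤ m * L ∧ 0 ≤ p ∧ p ≤ 1 ∧
    p * ((r : ℝ) * n) ^ (r - 1) ≤ (m : ℝ) / 2 * ((L : ℝ) / 2) ^ (r - 1) ∧
    2 ^ k * (1 - p / 2) ^ T ≤ Real.exp (-(c / 4) * m) := by
  have hr' : (2 : ℝ) ≤ r := by exact_mod_cast hr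
  have hr0 : (0 : ℝ) < r := by linarith
  have hn1 : 1 ≤ n := by nlinarith
  have hn0 : (0 : ℝ) < n := by exact_mod_cast hn1
  have hm0 : (0 : ℝ) < m := by exact_mod_cast hm
  have hxle := hx_le r n hr hn1
  have hrm : r * m ≤ n := by
    have : (r : ℝ) * m ≤ n := by
      rw [le_div_iff₀ hr0] at hmx; linarith
    exact_mod_cast this
  have hrmpos : 0 < r * m := by positivity
  have hL1 : 1 ≤ L := by rw [hL]; exact (Nat.one_le_div_iff hrmpos).2 hrm
  have hmLn : r * m * L ≤ n := by rw [hL]; exact Nat.mul_div_le n (r * m)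
  have hn2 : n ≤ 2 * (r * m * L) := by
    have h1 : n < r * m * L + r * m := by
      have := Nat.lt_mul_div_succ n hrmpos
      rw [hL]; linarith [this]
    have h2 : r * m ≤ r * m * L := Nat.le_mul_of_pos_right _ hL1
    omega
  have hDpos : (1 : ℝ) ≤ (4 * (r : ℝ) ^ 2) ^ (r - 1) := one_le_pow₀ (by nlinarith)
  set D := (4 * (r : ℝ) ^ 2) ^ (r - 1) with hD
  have hc0 : 0 < c := by rw [hc]; positivity
  have hc1 : c ≤ 1 := by
    rw [hc, div_le_one (by positivity)]
    nlinarith [mul_le_mul hDpos (show (1:ℝ) ≤ (r:ℝ)^2 by nlinarith) (by norm_num) (by positivity)]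
  have hkr : (k : ℝ) ≤ c / 4 * m := by rw [hk]; exact Nat.floor_le (by positivity)
  have hk4 : 4 * k ≤ m := by
    have : 4 * (k : ℝ) ≤ m := by nlinarith
    exact_mod_cast this
  have hT1 : 8 * r * T ≤ m * L := by rw [hT]; exact Nat.mul_div_le _ _
  have hmxx : (m : ℝ) ≤ hx r n := hmx.trans (div_le_self (hx_nonneg r n) (by linarith))
  have hms : (m : ℝ) ^ (r - 1) ≤ n := by
    rw [← hx_pow r n hr]; exact pow_le_pow_left₀ hm0.le hmxx _
  have hp0 : 0 ≤ p := by rw [hp]; positivity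
  have hp1 : p ≤ 1 := by
    rw [hp, div_le_one (by positivity)]
    nlinarith
  refine ⟨hL1, hmLn, hk4, hT1, hp0, hp1, ?_, ?_⟩
  · have h1 : (r : ℝ) * n ≤ (4 * (r : ℝ) ^ 2) * (L / 2) * m := by
      have : (n : ℝ) ≤ 2 * (r * m * L) := by exact_mod_cast hn2
      nlinarith
    have h2 : ((r : ℝ) * n) ^ (r - 1) ≤ D * ((L : ℝ) / 2) ^ (r - 1) * n := by
      calc _ ≤ ((4 * (r : ℝ) ^ 2) * (L / 2) * m) ^ (r - 1) := pow_le_pow_left₀ (by positivity) h1 _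
        _ = D * ((L : ℝ) / 2) ^ (r - 1) * (m : ℝ) ^ (r - 1) := by rw [mul_pow, mul_pow]
        _ ≤ _ := by gcongr
    calc p * ((r : ℝ) * n) ^ (r - 1) ≤ p * (D * ((L : ℝ) / 2) ^ (r - 1) * n) := by gcongr
      _ = _ := by rw [hp]; field_simp
  · have hTn : (n : ℝ) ≤ 32 * (r : ℝ) ^ 2 * T := by
      have h1 : m * L < 8 * r * T + 8 * r := by
        have := Nat.lt_mul_div_succ (m * L) (show 0 < 8 * r by omega)
        rw [hT]; linarith [this]
      have h2 : n ≤ 2 * r * (m * L) := by linarith [hn2]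
      have h3 : 2 * r * (m * L) ≤ 2 * r * (8 * r * T + 8 * r) := Nat.mul_le_mul_left _ h1.le
      have h3' : 2 * r * (m * L) + 2 * r ≤ 2 * r * (8 * r * T + 8 * r) := by
        have := Nat.mul_le_mul_left (2 * r) h1
        linarith [this]
      have hT0 : 1 ≤ T := by
        by_contra h
        have : T = 0 := by omega
        subst this
        nlinarith
      have h4 : n ≤ 32 * r ^ 2 * T := by
        have : r ^ 2 ≤ r ^ 2 * T := Nat.le_mul_of_pos_right _ hT0
        nlinarith
      exact_mod_cast h4
    have hpT : c * m ≤ p * T := by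
      rw [hc, hp, div_mul_eq_mul_div, div_mul_eq_mul_div, div_le_div_iff₀ (by positivity) (by positivity)]
      have : 2 * D * m * n ≤ 2 * D * m * (32 * (r : ℝ) ^ 2 * T) := by gcongr
      nlinarith
    have h1 : (1 - p / 2) ^ T ≤ Real.exp (-(p / 2) * T) := by
      have h2 : 1 - p / 2 ≤ Real.exp (-(p / 2)) := by
        have := Real.add_one_le_exp (-(p / 2)); linarith
      calc _ ≤ Real.exp (-(p / 2)) ^ T := pow_le_pow_left₀ (by linarith) h2 _
        _ = _ := by rw [← Real.exp_nat_mul]; congr 1; ring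
    have h2 : (2 : ℝ) ^ k ≤ Real.exp k := by
      have : (2 : ℝ) ≤ Real.exp 1 := by have := Real.add_one_le_exp (1 : ℝ); linarith
      calc _ ≤ Real.exp 1 ^ k := pow_le_pow_left₀ (by norm_num) this _
        _ = _ := by rw [← Real.exp_nat_mul]; simp
    calc _ ≤ Real.exp k * Real.exp (-(p / 2) * T) :=
          mul_le_mul h2 h1 (pow_nonneg (by linarith) _) (by positivity)
      _ = Real.exp (k + -(p / 2) * T) := by rw [Real.exp_add]
      _ ≤ _ := by
        apply Real.exp_le_exp.2
        nlinarith

lemma lower_prob (r : ℕ) (hr : 2 ≤ r) {P Q : Finset (Finset ℕ)} {bl : ℕ → ℕ} {sgP sgQ : ℕ → Bool}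
    (hP : PatStruct r P bl sgP) (hQ : PatStruct r Q bl sgQ)
    (hbl : ∀ a b, a ≤ b → bl a ≤ bl b) (hble : ∀ a, bl a ≤ a)
    (hcP : ∀ a b, bl a = bl b → sgP a = sgP b) (hcQ : ∀ a b, bl a = bl b → sgQ a = sgQ b)
    (hP0 : sgP 0 = true) (hQ0 : sgQ 0 = true)
    (d : ℕ) (hd : d < r) (hdne : sgP d ≠ sgQ d) :
    ∃ c₁ : ℝ, 0 < c₁ ∧ Filter.Tendsto (fun n : ℕ => prob r n (fun M =>
      ¬ (c₁ * hx r n ≤ (zClique r {P, Q} M : ℝ)))) Filter.atTop (nhds 0) := by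
  have hr0 : (0 : ℝ) < r := by exact_mod_cast (by omega : 0 < r)
  obtain ⟨c, hc⟩ : ∃ c : ℝ, c = 1 / (64 * (r : ℝ) ^ 2 * (4 * (r : ℝ) ^ 2) ^ (r - 1)) := ⟨_, rfl⟩
  have hc0 : 0 < c := by rw [hc]; positivity
  have hm : Filter.Tendsto (fun n => ⌊hx r n / r⌋₊) Filter.atTop Filter.atTop :=
    tendsto_nat_floor_atTop.comp ((hx_tendsto r hr).atTop_div_const hr0)
  have hlim : Filter.Tendsto (fun n => Real.exp (-(c / 4) * (⌊hx r n / r⌋₊ : ℕ))) Filter.atTop (nhds 0) := by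
    refine Real.tendsto_exp_atBot.comp ?_
    have h1 : Filter.Tendsto (fun n => ((⌊hx r n / r⌋₊ : ℕ) : ℝ)) Filter.atTop Filter.atTop :=
      tendsto_natCast_atTop_atTop.comp hm
    exact h1.const_mul_atTop_of_neg (by linarith)
  refine ⟨c / 4 / (2 * r), by positivity, ?_⟩
  refine tendsto_of_tendsto_of_tendsto_of_le_of_le' tendsto_const_nhds hlim
    (Filter.Eventually.of_forall fun n => prob_nonneg _ _ _) ?_
  filter_upwards [hm.eventually_ge_atTop 1, Filter.eventually_ge_atTop (16 * r ^ 2),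
    (hx_tendsto r hr).eventually_ge_atTop ((c / 4 + 1) / (c / 4 / (2 * r)))] with n hn1 hn2 hn3
  have hfl : ((⌊hx r n / r⌋₊ : ℕ) : ℝ) ≤ hx r n / r :=
    Nat.floor_le (div_nonneg (hx_nonneg r n) hr0.le)
  have hfl2 : hx r n / r < ((⌊hx r n / r⌋₊ : ℕ) : ℝ) + 1 := Nat.lt_floor_add_one _
  generalize ⌊hx r n / r⌋₊ = m at *
  obtain ⟨h1, h2, h3, h4, h5, h6, h7, h8⟩ := lower_calc r n m (n / (r * m)) (m * (n / (r * m)) / (8 * r))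
    ⌊c / 4 * m⌋₊ hr hn1 hfl rfl rfl hn2 c hc rfl _ rfl
  refine (prob_le r n (by omega) _ _ _ ?_
    (lower_tail hr hP hQ hbl hble hcP hcQ hP0 hQ0 d hd hdne hn1 h1 h2 h3 h4 _ h5 h6 h7)).trans h8
  intro M hM K hK hKc
  have hz := le_zClique hK hKc
  refine lt_of_le_of_lt hz ?_
  have hk : c / 4 * m < (⌊c / 4 * m⌋₊ : ℝ) + 1 := Nat.lt_floor_add_one _
  rw [div_le_iff₀ (by positivity)] at hn3
  have hE : c / 4 * (hx r n / r) = 2 * (c / 4 / (2 * r) * hx r n) := by field_simp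
  have hM' := not_le.1 hM
  have : c / 4 * (hx r n / r) ≤ c / 4 * (m + 1) := by gcongr
  have : (zClique r {P, Q} M : ℝ) < (⌊c / 4 * m⌋₊ : ℝ) := by
    nlinarith
  exact_mod_cast this

lemma upper_prob (r : ℕ) (hr : 2 ≤ r) {P Q : Finset (Finset ℕ)} {bl : ℕ → ℕ} {sgP sgQ : ℕ → Bool}
    (hP : PatStruct r P bl sgP) (hQ : PatStruct r Q bl sgQ)
    (hP0 : sgP 0 = true) (hQ0 : sgQ 0 = true)
    (d : ℕ) (hd : d < r) (hdne : sgP d ≠ sgQ d) :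
    ∃ c₂ : ℝ, 0 < c₂ ∧ Filter.Tendsto (fun n : ℕ => prob r n (fun M =>
      ¬ ((zClique r {P, Q} M : ℝ) ≤ c₂ * hx r n))) Filter.atTop (nhds 0) := by
  obtain ⟨c, hc⟩ : ∃ c : ℝ, c = 2 * (r.factorial : ℝ) * Real.exp r := ⟨_, rfl⟩
  have hc0 : 0 < c := by
    have : (0 : ℝ) < r.factorial := by exact_mod_cast Nat.factorial_pos _
    rw [hc]; positivity
  have hm : Filter.Tendsto (fun n => ⌊c * hx r n⌋₊ + 1) Filter.atTop Filter.atTop :=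
    (Filter.tendsto_add_atTop_nat 1).comp
      (tendsto_nat_floor_atTop.comp ((hx_tendsto r hr).const_mul_atTop hc0))
  have hlim : Filter.Tendsto (fun n => (1 / 2 : ℝ) ^ (⌊c * hx r n⌋₊ + 1)) Filter.atTop (nhds 0) :=
    (tendsto_pow_atTop_nhds_zero_of_lt_one (by norm_num) (by norm_num)).comp hm
  refine ⟨c, hc0, ?_⟩
  refine tendsto_of_tendsto_of_tendsto_of_le_of_le tendsto_const_nhds hlim
    (fun n => prob_nonneg _ _ _) fun n => ?_
  refine (prob_le r n (by omega) _ _ _ ?_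
    (first_moment (k := ⌊c * hx r n⌋₊ + 1) (by omega) hP hQ hP0 hQ0 d hd hdne)).trans
    (upper_calc r n _ hr ?_)
  · intro M hM
    apply exists_of_le_zClique
    have := not_le.1 hM
    exact (Nat.floor_lt (mul_nonneg hc0.le (hx_nonneg r n))).2 this
  · rw [← hc]; push_cast
    exact (Nat.lt_floor_add_one _).le

/-- **Theorem (harmonious pairs).** For every `r ≥ 2` and every harmonious pair `{P, Q}` of
distinct `r`-patterns, a.a.s. `z_{{P,Q}}(RM_n^(r)) = Θ(n^(1/(r−1)))`. -/
theorem aas_harmonious_pair (r : ℕ) (hr : 2 ≤ r) (P Q : Finset (Finset ℕ))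
    (hP : IsOrderedMatching r 2 P) (hQ : IsOrderedMatching r 2 Q)
    (hPQ : Harmonious r P Q) :
    ∃ c₁ c₂ : ℝ, 0 < c₁ ∧ 0 < c₂ ∧
      Filter.Tendsto
        (fun n : ℕ => prob r n (fun M =>
          c₁ * (n : ℝ) ^ ((1 : ℝ) / ((r : ℝ) - 1)) ≤ (zClique r {P, Q} M : ℝ) ∧
          (zClique r {P, Q} M : ℝ) ≤ c₂ * (n : ℝ) ^ ((1 : ℝ) / ((r : ℝ) - 1))))
        Filter.atTop (nhds 1) := by
  obtain ⟨hne, -, -, lam, hlP, hlQ⟩ := hPQ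
  obtain ⟨sgP, hSP, hP0, hcP⟩ := patStruct_of_comp r hr P hP lam hlP
  obtain ⟨sgQ, hSQ, hQ0, hcQ⟩ := patStruct_of_comp r hr Q hQ lam hlQ
  obtain ⟨d, hd, hdne⟩ : ∃ d, d < r ∧ sgP d ≠ sgQ d := by
    by_contra hcon
    push Not at hcon
    exact hne (patStruct_unique hSP hSQ hcon)
  obtain ⟨c₁, hc₁, hlow⟩ := lower_prob r hr hSP hSQ (hblk_mono lam) (hblk_le lam hlP.1) hcP hcQ
    hP0 hQ0 d hd hdne
  obtain ⟨c₂, hc₂, hupp⟩ := upper_prob r hr hSP hSQ hP0 hQ0 d hd hdne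
  refine ⟨c₁, c₂, hc₁, hc₂, ?_⟩
  have h1 := ((tendsto_const_nhds (x := (1 : ℝ))).sub hlow).sub hupp
  rw [sub_zero, sub_zero] at h1
  exact tendsto_of_tendsto_of_tendsto_of_le_of_le h1 tendsto_const_nhds
    (fun n => prob_and r n (by omega) (fun M => c₁ * hx r n ≤ (zClique r {P, Q} M : ℝ))
      (fun M => (zClique r {P, Q} M : ℝ) ≤ c₂ * hx r n))
    (fun n => prob_le_one _ _ _)
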